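/- arXiv:2404.14391 — 2 statements merged into one kernel-verified Lean document; each statement's English description precedes it below -/
import Mathlib

section
/- Let {Δ_n} be a sequence of closed intervals converging to a non-degenerate closed interval Δ, let μ ∈ USz(Δ), and let {h_n} be a sequence of continuous functions converging uniformly, with limit h, on some closed interval containing Δ in its interior. Then ( H_{Δ_n}( log v_n + h_n|_{Δ_n} ) )(z) → ( H_Δ( log v + h|_Δ ) )(z) locally uniformly in D_Δ as n→∞, where v_n and v are the Radon–Nikodym derivatives of μ|_{Δ_n} and μ|_Δ with respect to ω_{Δ_n} and ω_Δ, respectively. -/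
open MeasureTheory Set Filter Topology Polynomial

noncomputable section

/-- The arcsine distribution `dω_[a,b](x) = dx/(π √((x−a)(b−x)))` on `[a,b]`. -/
def arcsineMeasure (a b : ℝ) : Measure ℝ :=
  (volume.restrict (Set.Icc a b)).withDensity
    fun x => ENNReal.ofReal (1 / (Real.pi * Real.sqrt ((x - a) * (b - x))))

/-- The branch of `√((z−a)(z−b))` holomorphic off `[a,b]` with `w(z) = z + O(1)` at `∞`. -/
def wBranch (a b : ℝ) (z : ℂ) : ℂ :=
  (z - a) * Complex.exp ((1 / 2 : ℂ) * Complex.log ((z - b) / (z - a)))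

/-- Cauchy transform `∫ u(x)/(z−x) dω_[a,b](x)`. -/
def cauchyT (a b : ℝ) (u : ℝ → ℝ) (z : ℂ) : ℂ :=
  ∫ x, (u x : ℂ) / (z - (x : ℂ)) ∂(arcsineMeasure a b)

/-- `H_Δ u`, the harmonic extension of `u` off `Δ = [a,b]`. -/
def harmExt (a b : ℝ) (u : ℝ → ℝ) (z : ℂ) : ℝ :=
  (wBranch a b z * cauchyT a b u z).re

/-- The outer function `Ω_Δ(f,z) := exp( w_Δ(z) ∫ log f(x)/(z−x) dω_Δ(x) )`. -/
def OmegaFun (a b : ℝ) (f : ℝ → ℝ) (z : ℂ) : ℂ :=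
  Complex.exp (wBranch a b z * cauchyT a b (fun x => Real.log (f x)) z)

/-- The value of `Ω_Δ(f,·)` at infinity: `exp( ∫ log f dω_Δ )`. -/
def OmegaInf (a b : ℝ) (f : ℝ → ℝ) : ℝ :=
  Real.exp (∫ x, Real.log (f x) ∂(arcsineMeasure a b))

/-- Radon–Nikodym derivative `μ′` of `μ` with respect to Lebesgue measure. -/
def lebDeriv (μ : Measure ℝ) (x : ℝ) : ℝ := (μ.rnDeriv volume x).toReal

/-- `v_Δ(x) = π μ′(x) √((x−a)(b−x))`, the density of `μ|_Δ` w.r.t. the arcsine law. -/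
def vDens (μ : Measure ℝ) (a b : ℝ) (x : ℝ) : ℝ :=
  Real.pi * lebDeriv μ x * Real.sqrt ((x - a) * (b - x))

/-- Szegő function `G(e^h μ|_[a,b], z)`. -/
def szegoG (μ : Measure ℝ) (a b : ℝ) (h : ℝ → ℝ) (z : ℂ) : ℂ :=
  OmegaFun a b (fun x => Real.sqrt (Real.exp (h x) * vDens μ a b x)) z

/-- Szegő function `G(e^h μ|_[a,b], ·)` at infinity. -/
def szegoGInf (μ : Measure ℝ) (a b : ℝ) (h : ℝ → ℝ) : ℝ :=
  OmegaInf a b fun x => Real.sqrt (Real.exp (h x) * vDens μ a b x)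

/-- Support of a measure on `ℝ`. -/
def msupp (μ : Measure ℝ) : Set ℝ := {x | ∀ ε > 0, 0 < μ (Metric.ball x ε)}

def suppInf (μ : Measure ℝ) : ℝ := sInf (msupp μ)
def suppSup (μ : Measure ℝ) : ℝ := sSup (msupp μ)

/-- `Δ(μ)`, the convex hull of the support of `μ`. -/
def convHullSupp (μ : Measure ℝ) : Set ℝ := Set.Icc (suppInf μ) (suppSup μ)

/-- Logarithmic potential `V^ω(x) = −∫ log|x−t| dω(t)`. -/
def logPot (ω : Measure ℝ) (x : ℝ) : ℝ := -∫ t, Real.log |x - t| ∂ω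

/-- The Szegő condition `μ ∈ Sz([a,b])`. -/
def SzCond (μ : Measure ℝ) (a b : ℝ) : Prop :=
  Integrable (fun x => Real.log (lebDeriv μ x)) (arcsineMeasure a b)

/-- The increasing affine map of `[a,b]` onto `[c,d]`. -/
def affIcc (a b c d : ℝ) (x : ℝ) : ℝ := c + ((d - c) / (b - a)) * (x - a)

/-- The uniform Szegő condition `μ ∈ USz([a,b])`. -/
def USzCond (μ : Measure ℝ) (a b : ℝ) : Prop :=
  SzCond μ a b ∧
  ∀ A B : ℕ → ℝ, (∀ n, A n < B n) → (∀ n, Set.Icc (A n) (B n) ⊆ convHullSupp μ) →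
    Tendsto A atTop (𝓝 a) → Tendsto B atTop (𝓝 b) →
    (∀ᶠ n in atTop, SzCond μ (A n) (B n)) ∧
    Tendsto (fun n => ∫ x,
        |Real.log (lebDeriv μ x) - Real.log (lebDeriv μ (affIcc a b (A n) (B n) x))|
          ∂(arcsineMeasure a b)) atTop (𝓝 0)

/-- `P` is the `n`-th monic orthogonal polynomial with respect to `ν`. -/
def IsMonicOP (ν : Measure ℝ) (n : ℕ) (P : Polynomial ℝ) : Prop :=
  P.Monic ∧ P.natDegree = n ∧ ∀ k < n, ∫ x, x ^ k * P.eval x ∂ν = 0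

/-- The weighted measure `e^θ μ`. -/
def expWt (μ : Measure ℝ) (θ : ℝ → ℝ) : Measure ℝ :=
  μ.withDensity fun x => ENNReal.ofReal (Real.exp (θ x))

/-- An Angelesco system of `d` measures, with `Δ(μ_i) = [lo i, hi i]`. -/
structure Angelesco (d : ℕ) (μ : Fin d → Measure ℝ) (lo hi : Fin d → ℝ) : Prop where
  two_le : 2 ≤ d
  bounded : ∀ i, Bornology.IsBounded (msupp (μ i))
  infinite : ∀ i, (msupp (μ i)).Infinite
  lo_eq : ∀ i, lo i = suppInf (μ i)
  hi_eq : ∀ i, hi i = suppSup (μ i)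
  sep : ∀ i j, i < j → hi i < lo j

/-- The vector equilibrium measure `(ω_1,…,ω_d)` with parameter `c`,
with `supp ω_i = [A i, B i] ⊆ [lo i, hi i]` and masses `c i`. -/
structure VecEquil (d : ℕ) (lo hi : Fin d → ℝ) (c : Fin d → ℝ)
    (ω : Fin d → Measure ℝ) (A B : Fin d → ℝ) : Prop where
  endpoints : ∀ i, lo i ≤ A i ∧ A i < B i ∧ B i ≤ hi i
  supp : ∀ i, msupp (ω i) = Set.Icc (A i) (B i)
  mass : ∀ i, ω i Set.univ = ENNReal.ofReal (c i)
  equil : ∀ j, ∃ ℓ : ℝ,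
    (∀ x ∈ Set.Icc (A j) (B j), logPot (ω j) x + ∑ i, logPot (ω i) x = ℓ) ∧
    (∀ x ∈ Set.Icc (lo j) (hi j) \ Set.Icc (A j) (B j),
        ℓ < logPot (ω j) x + ∑ i, logPot (ω i) x)

/-- The vector `(S_1,…,S_d)` of conjugate-symmetric outer functions in `H²(D_{Δ_i})`,
positive at infinity, with boundary moduli `g_i` satisfying
`|S_{i±}|² ∏_{j≠i} S_j = v_i` a.e. on `Δ_i` (outer functions positive at infinity are
recovered from their boundary moduli by `S_i = Ω_{Δ_i}(g_i, ·)`). -/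
def IsSzegoVector (d : ℕ) (A B : Fin d → ℝ) (v : Fin d → ℝ → ℝ)
    (g : Fin d → ℝ → ℝ) (S : Fin d → ℂ → ℂ) : Prop :=
  (∀ i x, 0 ≤ g i x) ∧
  (∀ i, Integrable (fun x => Real.log (g i x)) (arcsineMeasure (A i) (B i))) ∧
  (∀ i, S i = fun z => OmegaFun (A i) (B i) (g i) z) ∧
  (∀ i, ∀ᵐ x ∂(arcsineMeasure (A i) (B i)),
    (g i x) ^ 2 * ∏ j ∈ Finset.univ.erase i, (S j (x : ℂ)).re = v i x)

/-- The operator `ℋ` with component `i` equal to `−(1/2) Σ_{j≠i} H_{[A j, B j]} u_j`. -/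
def calH (d : ℕ) (A B : Fin d → ℝ) (u : Fin d → ℝ → ℝ) (i : Fin d) (x : ℝ) : ℝ :=
  -(1 / 2) * ∑ j ∈ Finset.univ.erase i, harmExt (A j) (B j) (u j) (x : ℂ)

/-- sup norm over `[a,b]`. -/
def supIcc (a b : ℝ) (f : ℝ → ℝ) : ℝ := sSup ((fun x => |f x|) '' Set.Icc a b)

/-- Norm of `C(Δ⃗)`. -/
def vecCNorm (d : ℕ) (A B : Fin d → ℝ) (u : Fin d → ℝ → ℝ) : ℝ :=
  ∑ i, supIcc (A i) (B i) (u i)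

/-- Norm of `C¹(Δ⃗)`. -/
def vecC1Norm (d : ℕ) (A B : Fin d → ℝ) (u : Fin d → ℝ → ℝ) : ℝ :=
  ∑ i, (supIcc (A i) (B i) (u i) +
    supIcc (A i) (B i) (derivWithin (u i) (Set.Icc (A i) (B i))))

/-- membership in `C(Δ⃗)`. -/
def memVecC (d : ℕ) (A B : Fin d → ℝ) (u : Fin d → ℝ → ℝ) : Prop :=
  ∀ i, ContinuousOn (u i) (Set.Icc (A i) (B i))

/-- membership in `C¹(Δ⃗)`. -/
def memVecC1 (d : ℕ) (A B : Fin d → ℝ) (u : Fin d → ℝ → ℝ) : Prop :=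
  ∀ i, ContDiffOn ℝ 1 (u i) (Set.Icc (A i) (B i))

/-- `|w_Δ(x)|` for real `x`. -/
def wAbs (p q x : ℝ) : ℝ := Real.sqrt |(x - p) * (x - q)|

/-- Riemann–Liouville type fractional integral of order 1/2. -/
def fracInt (γ : ℝ) (θ : ℝ → ℝ) (x : ℝ) : ℝ :=
  (Real.sqrt Real.pi)⁻¹ * ∫ t in γ..x, θ t / Real.sqrt |x - t|
/-!
Under the substitution `x = (a + b) / 2 - (b - a) / 2 * cos θ` the arcsine law of every interval
`[a, b]` becomes the uniform law on `(0, π)`. The functions `H_Δ u` on varying intervals are thus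
integrals against one measure, with a kernel `1 / (z - x(θ))` that is bounded and jointly continuous
in the end points, `z` and `θ`; hence `H_{Δ_i} u_i → H_Δ u` locally uniformly off `Δ` as soon as
`u_i ∘ x_i → u ∘ x` in `L¹(dθ)`. For `u = log v + h` this is checked term by term, writing
`log v = log μ' + (log (π (b - a) / 2) + log (sin θ)) * χ` with `χ` the indicator of `{μ' ≠ 0}`: the
first term converges by the uniform Szegő condition, and in the second `χ` converges in measure,
because `g ↦ g ∘ φ_i` is equicontinuous on `L¹` when the images of a measure under the `φ_i` are
dominated by Lebesgue measure, which reduces the convergence `g ∘ φ_i → g ∘ φ` to continuous `g`.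
-/

open scoped ENNReal

theorem exists_eventually_forall_norm_le {X Y E : Type*} [TopologicalSpace X] [TopologicalSpace Y]
    [SeminormedAddCommGroup E] {f : X → Y → E} {x₀ : X} {s : Set Y} (hs : IsCompact s)
    (hf : ∀ y ∈ s, ContinuousAt (Function.uncurry f) (x₀, y)) :
    ∃ C, ∀ᶠ x in 𝓝 x₀, ∀ y ∈ s, ‖f x y‖ ≤ C := by
  have hf₀ : ContinuousOn (f x₀) s := fun y hy =>
    ((hf y hy).comp (f := fun y => (x₀, y)) (by fun_prop)).continuousWithinAt
  obtain ⟨C, hC⟩ := hs.exists_bound_of_continuousOn hf₀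
  refine ⟨C + 1, hs.eventually_forall_of_forall_eventually fun y hy => ?_⟩
  exact (hf y hy).norm.eventually_le_const ((hC y hy).trans_lt (lt_add_one C))

section ConvergenceInL1

variable {X E ι : Type*} [MeasurableSpace X] {μ : Measure X} [NormedAddCommGroup E]
  {l : Filter ι} {F G : ι → X → E} {f g : X → E}

/-- Convergence in `L¹(μ)` along `l`, for functions rather than classes in `Lp`, so that the members
of the family need only be integrable eventually. -/
structure TendstoL1 (F : ι → X → E) (f : X → E) (l : Filter ι) (μ : Measure X) : Prop where
  integrable : Integrable f μ
  eventually_integrable : ∀ᶠ i in l, Integrable (F i) μ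
  tendsto_eLpNorm : Tendsto (fun i => eLpNorm (F i - f) 1 μ) l (𝓝 0)

namespace TendstoL1

theorem const (hf : Integrable f μ) (l : Filter ι) : TendstoL1 (fun _ => f) f l μ :=
  ⟨hf, .of_forall fun _ => hf, by simpa using tendsto_const_nhds⟩

theorem congr (hF : TendstoL1 F f l μ) (hFG : ∀ᶠ i in l, F i =ᵐ[μ] G i) (hfg : f =ᵐ[μ] g) :
    TendstoL1 G g l μ where
  integrable := hF.integrable.congr hfg
  eventually_integrable := by
    filter_upwards [hF.eventually_integrable, hFG] with i hi hFGi using hi.congr hFGi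
  tendsto_eLpNorm := hF.tendsto_eLpNorm.congr' <| by
    filter_upwards [hFG] with i hi using eLpNorm_congr_ae (hi.sub hfg)

theorem comp {κ : Type*} {l' : Filter κ} {k : κ → ι} (hF : TendstoL1 F f l μ)
    (hk : Tendsto k l' l) : TendstoL1 (F ∘ k) f l' μ :=
  ⟨hF.integrable, hk.eventually hF.eventually_integrable, hF.tendsto_eLpNorm.comp hk⟩

theorem add (hF : TendstoL1 F f l μ) (hG : TendstoL1 G g l μ) :
    TendstoL1 (fun i => F i + G i) (f + g) l μ where
  integrable := hF.integrable.add hG.integrable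
  eventually_integrable := by
    filter_upwards [hF.eventually_integrable, hG.eventually_integrable] with i hFi hGi
      using hFi.add hGi
  tendsto_eLpNorm := by
    have hsum : Tendsto (fun i => eLpNorm (F i - f) 1 μ + eLpNorm (G i - g) 1 μ) l (𝓝 0) := by
      simpa only [add_zero] using hF.tendsto_eLpNorm.add hG.tendsto_eLpNorm
    refine tendsto_of_tendsto_of_tendsto_of_le_of_le' tendsto_const_nhds hsum
      (.of_forall fun _ => zero_le) ?_
    filter_upwards [hF.eventually_integrable, hG.eventually_integrable] with i hFi hGi
    rw [add_sub_add_comm]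
    exact eLpNorm_add_le (hFi.sub hF.integrable).1 (hGi.sub hG.integrable).1 le_rfl

theorem tendsto_integral [NormedSpace ℝ E] (hF : TendstoL1 F f l μ) :
    Tendsto (fun i => ∫ x, F i x ∂μ) l (𝓝 (∫ x, f x ∂μ)) :=
  tendsto_integral_of_L1' f hF.integrable.1 hF.eventually_integrable hF.tendsto_eLpNorm

theorem of_tendsto_integral_norm_sub (hf : Integrable f μ) (hF : ∀ᶠ i in l, Integrable (F i) μ)
    (hlim : Tendsto (fun i => ∫ x, ‖F i x - f x‖ ∂μ) l (𝓝 0)) : TendstoL1 F f l μ where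
  integrable := hf
  eventually_integrable := hF
  tendsto_eLpNorm := by
    have h := ENNReal.tendsto_ofReal hlim
    rw [ENNReal.ofReal_zero] at h
    refine h.congr' ?_
    filter_upwards [hF] with i hi
    rw [eLpNorm_one_eq_lintegral_enorm, ← ofReal_integral_norm_eq_lintegral_enorm (hi.sub hf)]
    rfl

theorem of_dominated [l.IsCountablyGenerated] {bound : X → ℝ} (hf : Integrable f μ)
    (hF : ∀ᶠ i in l, AEStronglyMeasurable (F i) μ) (hbound : Integrable bound μ)
    (hF_le : ∀ᶠ i in l, ∀ᵐ x ∂μ, ‖F i x‖ ≤ bound x)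
    (hlim : ∀ᵐ x ∂μ, Tendsto (fun i => F i x) l (𝓝 (f x))) : TendstoL1 F f l μ where
  integrable := hf
  eventually_integrable := by
    filter_upwards [hF, hF_le] with i hi hi_le using hbound.mono' hi hi_le
  tendsto_eLpNorm := by
    simp only [eLpNorm_one_eq_lintegral_enorm]
    rw [← lintegral_zero (μ := μ)]
    refine tendsto_lintegral_filter_of_dominated_convergence'
      (fun x => ‖bound x‖ₑ + ‖f x‖ₑ) ?_ ?_ ?_ ?_
    · filter_upwards [hF] with i hi using (hi.sub hf.1).enorm
    · filter_upwards [hF_le] with i hi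
      filter_upwards [hi] with x hx
      exact enorm_sub_le.trans
        (add_le_add_left (enorm_le_iff_norm_le.2 (hx.trans (le_abs_self _))) _)
    · rw [lintegral_add_left' hbound.1.enorm]
      exact ENNReal.add_ne_top.2 ⟨hbound.2.ne, hf.2.ne⟩
    · filter_upwards [hlim] with x hx
      simpa using (hx.sub_const (f x)).enorm

theorem of_tendsto_const [l.IsCountablyGenerated] [IsFiniteMeasure μ] {c : ι → E} {c₀ : E}
    (hc : Tendsto c l (𝓝 c₀)) : TendstoL1 (fun i _ => c i) (fun _ => c₀) l μ :=
  of_dominated (integrable_const _) (.of_forall fun _ => aestronglyMeasurable_const)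
    (integrable_const (‖c₀‖ + 1))
    ((hc.norm.eventually_le_const (lt_add_one _)).mono fun _ hi => .of_forall fun _ => hi)
    (.of_forall fun _ => hc)

section SMul

variable {𝕜 : Type*} [NormedField 𝕜] [NormedSpace 𝕜 E] {u : ι → X → 𝕜} {U : X → 𝕜}
  {K : ι → X → E} {K₀ : X → E} {C : ℝ}

theorem smul_bdd (hu : TendstoL1 u U l μ) (hK : ∀ᶠ i in l, AEStronglyMeasurable (K i) μ)
    (hKC : ∀ᶠ i in l, ∀ᵐ x ∂μ, ‖K i x‖ ≤ C) (hUK : TendstoL1 (fun i => U • K i) (U • K₀) l μ) :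
    TendstoL1 (fun i => u i • K i) (U • K₀) l μ := by
  have herr : TendstoL1 (fun i => (u i - U) • K i) 0 l μ := by
    refine ⟨integrable_zero .., ?_, ?_⟩
    · filter_upwards [hu.eventually_integrable, hK, hKC] with i hi hKi hKCi
        using (hi.sub hu.integrable).smul_bdd C hKi hKCi
    · have hC : Tendsto (fun i => ENNReal.ofReal C * eLpNorm (u i - U) 1 μ) l (𝓝 0) := by
        simpa using ENNReal.Tendsto.const_mul hu.tendsto_eLpNorm (.inr ENNReal.ofReal_ne_top)
      refine tendsto_of_tendsto_of_tendsto_of_le_of_le' tendsto_const_nhds hC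
        (.of_forall fun _ => zero_le) ?_
      filter_upwards [hKC] with i hi
      rw [sub_zero]
      refine eLpNorm_le_mul_eLpNorm_of_ae_le_mul ?_ 1
      filter_upwards [hi] with x hx
      rw [Pi.smul_apply', norm_smul, mul_comm]
      gcongr
  refine (herr.add hUK).congr (.of_forall fun i => ?_) (by rw [zero_add])
  rw [← add_smul, sub_add_cancel]

variable [l.IsCountablyGenerated]

theorem const_smul_of_tendsto_ae (hU : Integrable U μ)
    (hK : ∀ᶠ i in l, AEStronglyMeasurable (K i) μ) (hKC : ∀ᶠ i in l, ∀ᵐ x ∂μ, ‖K i x‖ ≤ C)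
    (hK₀ : AEStronglyMeasurable K₀ μ) (hK₀C : ∀ᵐ x ∂μ, ‖K₀ x‖ ≤ C)
    (hlim : ∀ᵐ x ∂μ, Tendsto (fun i => K i x) l (𝓝 (K₀ x))) :
    TendstoL1 (fun i => U • K i) (U • K₀) l μ := by
  refine of_dominated (hU.smul_bdd C hK₀ hK₀C) ?_ (hU.norm.mul_const C) ?_ ?_
  · filter_upwards [hK] with i hi using hU.1.smul hi
  · filter_upwards [hKC] with i hi
    filter_upwards [hi] with x hx
    rw [Pi.smul_apply', norm_smul]
    gcongr
  · filter_upwards [hlim] with x hx using hx.const_smul (U x)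

theorem smul_continuousAt {Y : Type*} [TopologicalSpace Y] [TopologicalSpace X] {s : Set X}
    {f : Y → X → E} {w : ι → Y} {y₀ : Y} (hu : TendstoL1 u U l μ) (hw : Tendsto w l (𝓝 y₀))
    (hf : ∀ᶠ y in 𝓝 y₀, AEStronglyMeasurable (f y) μ) (hs : IsCompact s) (hμs : ∀ᵐ x ∂μ, x ∈ s)
    (hcont : ∀ x ∈ s, ContinuousAt (Function.uncurry f) (y₀, x)) :
    TendstoL1 (fun i => u i • f (w i)) (U • f y₀) l μ := by
  obtain ⟨C, hC⟩ := exists_eventually_forall_norm_le hs hcont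
  have norm_le {y : Y} (hy : ∀ x ∈ s, ‖f y x‖ ≤ C) : ∀ᵐ x ∂μ, ‖f y x‖ ≤ C := hμs.mono hy
  have hfw_le := (hw.eventually hC).mono fun _ => norm_le
  refine hu.smul_bdd (hw.eventually hf) hfw_le (const_smul_of_tendsto_ae hu.integrable
    (hw.eventually hf) hfw_le hf.self_of_nhds (norm_le hC.self_of_nhds) ?_)
  filter_upwards [hμs] with x hx
  exact (hcont x hx).tendsto.comp (hw.prodMk_nhds tendsto_const_nhds)

theorem const_smul_of_tendstoInMeasure (hU : Integrable U μ)
    (hK : ∀ᶠ i in l, AEStronglyMeasurable (K i) μ) (hKC : ∀ᶠ i in l, ∀ᵐ x ∂μ, ‖K i x‖ ≤ C)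
    (hK₀ : AEStronglyMeasurable K₀ μ) (hK₀C : ∀ᵐ x ∂μ, ‖K₀ x‖ ≤ C)
    (hlim : TendstoInMeasure μ K l K₀) :
    TendstoL1 (fun i => U • K i) (U • K₀) l μ where
  integrable := hU.smul_bdd C hK₀ hK₀C
  eventually_integrable := by
    filter_upwards [hK, hKC] with i hi hiC using hU.smul_bdd C hi hiC
  tendsto_eLpNorm := by
    refine tendsto_of_subseq_tendsto fun k hk => ?_
    obtain ⟨φ, hφ, hae⟩ := (hlim.comp hk).exists_seq_tendsto_ae
    have hkφ := hk.comp hφ.tendsto_atTop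
    exact ⟨φ, (const_smul_of_tendsto_ae hU (hkφ.eventually hK) (hkφ.eventually hKC)
      hK₀ hK₀C hae).tendsto_eLpNorm⟩

end SMul

theorem of_approx (hf : Integrable f μ) (hF : ∀ᶠ i in l, Integrable (F i) μ)
    (happrox : ∀ ε : ℝ≥0∞, ε ≠ 0 → ∃ G g, TendstoL1 G g l μ ∧
      (∀ᶠ i in l, eLpNorm (F i - G i) 1 μ ≤ ε) ∧ eLpNorm (f - g) 1 μ ≤ ε) :
    TendstoL1 F f l μ := by
  refine ⟨hf, hF, ENNReal.tendsto_nhds_zero.2 fun ε hε => ?_⟩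
  have hε3 : ε / 3 ≠ 0 := (ENNReal.div_pos hε.ne' (by norm_num)).ne'
  obtain ⟨G, g, hG, hFG, hfg⟩ := happrox (ε / 3) hε3
  filter_upwards [hF, hG.eventually_integrable, hFG,
    ENNReal.tendsto_nhds_zero.1 hG.tendsto_eLpNorm (ε / 3) hε3.bot_lt] with i hFi hGi hFGi hGgi
  calc eLpNorm (F i - f) 1 μ
      = eLpNorm ((F i - G i) + (G i - g) - (f - g)) 1 μ := by congr 1; abel
    _ ≤ eLpNorm (F i - G i) 1 μ + eLpNorm (G i - g) 1 μ + eLpNorm (f - g) 1 μ :=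
      (eLpNorm_sub_le ((hFi.sub hGi).add (hGi.sub hG.integrable)).1
        (hf.sub hG.integrable).1 le_rfl).trans
        (add_le_add_left (eLpNorm_add_le (hFi.sub hGi).1 (hGi.sub hG.integrable).1 le_rfl) _)
    _ ≤ ε / 3 + ε / 3 + ε / 3 := by gcongr
    _ = ε := ENNReal.add_thirds ε

theorem comp_of_map_le {Y : Type*} [TopologicalSpace Y] [NormalSpace Y] [MeasurableSpace Y]
    [BorelSpace Y] [NormedSpace ℝ E] [l.IsCountablyGenerated] [IsFiniteMeasure μ] {ν : Measure Y}
    [ν.WeaklyRegular] {φ : ι → X → Y} {ψ : X → Y} {f : Y → E} (hf : Integrable f ν)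
    (hφ : ∀ᶠ i in l, Measurable (φ i)) (hψ : Measurable ψ)
    (hφν : ∀ᶠ i in l, μ.map (φ i) ≤ ν) (hψν : μ.map ψ ≤ ν)
    (hlim : ∀ᵐ x ∂μ, Tendsto (fun i => φ i x) l (𝓝 (ψ x))) :
    TendstoL1 (fun i => f ∘ φ i) (f ∘ ψ) l μ := by
  have integrable_comp {ρ : X → Y} (hρ : Measurable ρ) (hρν : μ.map ρ ≤ ν) {g : Y → E}
      (hg : Integrable g ν) : Integrable (g ∘ ρ) μ := (hg.mono_measure hρν).comp_measurable hρ
  have eLpNorm_comp_le {ρ : X → Y} (hρ : Measurable ρ) (hρν : μ.map ρ ≤ ν) {g : Y → E}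
      (hg : Integrable g ν) : eLpNorm (g ∘ ρ) 1 μ ≤ eLpNorm g 1 ν := by
    rw [← eLpNorm_map_measure (hg.mono_measure hρν).1 hρ.aemeasurable]
    exact eLpNorm_mono_measure g hρν
  refine of_approx (integrable_comp hψ hψν hf) ?_ fun ε hε => ?_
  · filter_upwards [hφ, hφν] with i hi hiν using integrable_comp hi hiν hf
  obtain ⟨g, hfg, hg⟩ :=
    (memLp_one_iff_integrable.2 hf).exists_boundedContinuous_eLpNorm_sub_le ENNReal.one_ne_top hε
  rw [memLp_one_iff_integrable] at hg
  refine ⟨fun i => g ∘ φ i, g ∘ ψ, ?_, ?_, (eLpNorm_comp_le hψ hψν (hf.sub hg)).trans hfg⟩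
  · refine of_dominated (integrable_comp hψ hψν hg) ?_ (integrable_const ‖g‖)
      (.of_forall fun i => .of_forall fun x => g.norm_coe_le_norm _) ?_
    · filter_upwards [hφ, hφν] with i hi hiν using (integrable_comp hi hiν hg).1
    · filter_upwards [hlim] with x hx using (g.continuous.tendsto _).comp hx
  · filter_upwards [hφ, hφν] with i hi hiν using (eLpNorm_comp_le hi hiν (hf.sub hg)).trans hfg

end TendstoL1

end ConvergenceInL1

theorem tendstoInMeasure_of_absolutelyContinuous {X ι E : Type*} [MeasurableSpace X] [EDist E]
    {μ ν : Measure X} [SigmaFinite μ] [IsFiniteMeasure ν] (hνμ : ν ≪ μ) {l : Filter ι}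
    {f : ι → X → E} {g : X → E} (hfg : TendstoInMeasure μ f l g) : TendstoInMeasure ν f l g := by
  intro ε hε
  simp only [← Measure.setLIntegral_rnDeriv hνμ]
  exact tendsto_setLIntegral_zero (Measure.lintegral_rnDeriv_lt_top ν μ).ne (hfg ε hε)

theorem map_withDensity_abs_deriv {s : Set ℝ} {f f' : ℝ → ℝ} (hs : MeasurableSet s)
    (hf' : ∀ x ∈ s, HasDerivWithinAt f (f' x) s x) (hinj : InjOn f s) (hf : Measurable f) :
    ((volume.restrict s).withDensity fun x => ENNReal.ofReal |f' x|).map f =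
      volume.restrict (f '' s) := by
  ext t ht
  rw [Measure.map_apply hf ht, withDensity_apply _ (hf ht), ← lintegral_indicator_one ht,
    lintegral_image_eq_lintegral_abs_deriv_mul hs hf' hinj, ← lintegral_indicator (hf ht)]
  refine lintegral_congr fun x => ?_
  by_cases hx : f x ∈ t <;> simp [indicator, hx]

section Arcsine

/-- The parametrisation of `[a, b]` by an angle in `[0, π]`; it turns the arcsine law of every
interval into the same measure, `angleMeasure`. -/
def anglePt (a b θ : ℝ) : ℝ := (a + b) / 2 - (b - a) / 2 * Real.cos θ

/-- The uniform probability measure on `(0, π)`. -/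
def angleMeasure : Measure ℝ := ENNReal.ofReal (1 / Real.pi) • volume.restrict (Ioo 0 Real.pi)

instance : IsProbabilityMeasure angleMeasure where
  measure_univ := by
    rw [angleMeasure, Measure.smul_apply, Measure.restrict_apply_univ, Real.volume_Ioo, sub_zero,
      smul_eq_mul, ← ENNReal.ofReal_mul (by positivity), one_div_mul_cancel Real.pi_ne_zero,
      ENNReal.ofReal_one]

theorem ae_angleMeasure_mem_Ioo : ∀ᵐ θ ∂angleMeasure, θ ∈ Ioo 0 Real.pi :=
  (Measure.smul_absolutelyContinuous).ae_le (ae_restrict_mem measurableSet_Ioo)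

theorem ae_angleMeasure_mem_Icc : ∀ᵐ θ ∂angleMeasure, θ ∈ Icc 0 Real.pi :=
  ae_angleMeasure_mem_Ioo.mono fun _ hθ => Ioo_subset_Icc_self hθ

theorem integral_angleMeasure {E : Type*} [NormedAddCommGroup E] [NormedSpace ℝ E] (g : ℝ → E) :
    ∫ θ, g θ ∂angleMeasure = ∫ θ in Ioo 0 Real.pi, (1 / Real.pi) • g θ := by
  rw [angleMeasure, integral_smul_measure, integral_smul, ENNReal.toReal_ofReal (by positivity)]

theorem integrable_angleMeasure_iff {E : Type*} [NormedAddCommGroup E] {g : ℝ → E} :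
    Integrable g angleMeasure ↔ IntegrableOn g (Ioo 0 Real.pi) :=
  integrable_smul_measure (by simp [Real.pi_pos]) ENNReal.ofReal_ne_top

theorem integrable_log_sin_angleMeasure :
    Integrable (fun θ => Real.log (Real.sin θ)) angleMeasure := by
  rw [integrable_angleMeasure_iff, ← intervalIntegrable_iff_integrableOn_Ioo_of_le Real.pi_pos.le]
  exact intervalIntegrable_log_sin

variable {a b θ : ℝ}

theorem continuous_anglePt (a b : ℝ) : Continuous (anglePt a b) := by
  unfold anglePt
  fun_prop

theorem hasDerivAt_anglePt (a b θ : ℝ) :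
    HasDerivAt (anglePt a b) ((b - a) / 2 * Real.sin θ) θ := by
  unfold anglePt
  simpa using ((Real.hasDerivAt_cos θ).const_mul ((b - a) / 2)).const_sub ((a + b) / 2)

theorem bijOn_anglePt (hab : a < b) : BijOn (anglePt a b) (Ioo 0 Real.pi) (Ioo a b) := by
  have hmono : StrictMonoOn (anglePt a b) (Icc 0 Real.pi) := fun x hx y hy hxy => by
    have := Real.strictAntiOn_cos hx hy hxy
    unfold anglePt
    nlinarith
  have h0 : anglePt a b 0 = a := by rw [anglePt, Real.cos_zero]; ring
  have hπ : anglePt a b Real.pi = b := by rw [anglePt, Real.cos_pi]; ring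
  refine ⟨fun θ hθ => ⟨?_, ?_⟩, (hmono.mono Ioo_subset_Icc_self).injOn, ?_⟩
  · exact h0.symm.trans_lt
      (hmono (left_mem_Icc.2 Real.pi_pos.le) (Ioo_subset_Icc_self hθ) hθ.1)
  · exact (hmono (Ioo_subset_Icc_self hθ) (right_mem_Icc.2 Real.pi_pos.le) hθ.2).trans_eq hπ
  · simpa only [SurjOn, h0, hπ] using
      intermediate_value_Ioo Real.pi_pos.le (continuous_anglePt a b).continuousOn

theorem sqrt_anglePt (hab : a ≤ b) (hθ : θ ∈ Icc 0 Real.pi) :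
    √((anglePt a b θ - a) * (b - anglePt a b θ)) = (b - a) / 2 * Real.sin θ := by
  have hsq : (anglePt a b θ - a) * (b - anglePt a b θ) = ((b - a) / 2 * Real.sin θ) ^ 2 := by
    rw [mul_pow, Real.sin_sq, anglePt]
    ring
  rw [hsq, Real.sqrt_sq (mul_nonneg (by linarith) (Real.sin_nonneg_of_mem_Icc hθ))]

theorem affIcc_anglePt (hab : a < b) (c d θ : ℝ) :
    affIcc a b c d (anglePt a b θ) = anglePt c d θ := by
  have : b - a ≠ 0 := by linarith
  unfold affIcc anglePt
  field_simp
  ring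

theorem anglePt_mem_Icc (hab : a ≤ b) (θ : ℝ) : anglePt a b θ ∈ Icc a b := by
  have := Real.neg_one_le_cos θ
  have := Real.cos_le_one θ
  constructor <;> unfold anglePt <;> nlinarith

theorem abs_deriv_mul_arcsine_density (hab : a < b) (hθ : θ ∈ Ioo 0 Real.pi) :
    |(b - a) / 2 * Real.sin θ| *
      (1 / (Real.pi * √((anglePt a b θ - a) * (b - anglePt a b θ)))) = 1 / Real.pi := by
  have hpos : 0 < (b - a) / 2 * Real.sin θ :=
    mul_pos (by linarith) (Real.sin_pos_of_mem_Ioo hθ)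
  rw [sqrt_anglePt hab.le (Ioo_subset_Icc_self hθ), abs_of_pos hpos,
    mul_one_div, mul_comm Real.pi, div_mul_cancel_left₀ hpos.ne', one_div]

variable {E : Type*} [NormedAddCommGroup E] [NormedSpace ℝ E]

theorem smul_density_comp_anglePt (hab : a < b) (hθ : θ ∈ Ioo 0 Real.pi) (g : ℝ → E) :
    |(b - a) / 2 * Real.sin θ| • ((ENNReal.ofReal (1 / (Real.pi *
      √((anglePt a b θ - a) * (b - anglePt a b θ))))).toReal • g (anglePt a b θ)) =
    (1 / Real.pi) • g (anglePt a b θ) := by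
  rw [ENNReal.toReal_ofReal (by positivity), smul_smul, abs_deriv_mul_arcsine_density hab hθ]

theorem integral_arcsineMeasure (hab : a < b) (g : ℝ → E) :
    ∫ x, g x ∂arcsineMeasure a b = ∫ θ, g (anglePt a b θ) ∂angleMeasure := by
  rw [arcsineMeasure, integral_withDensity_eq_integral_toReal_smul (by fun_prop)
    (.of_forall fun _ => ENNReal.ofReal_lt_top), integral_Icc_eq_integral_Ioo,
    ← (bijOn_anglePt hab).image_eq, integral_image_eq_integral_abs_deriv_smul measurableSet_Ioo
    (fun θ _ => (hasDerivAt_anglePt a b θ).hasDerivWithinAt) (bijOn_anglePt hab).injOn,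
    integral_angleMeasure]
  exact setIntegral_congr_fun measurableSet_Ioo fun θ hθ => smul_density_comp_anglePt hab hθ g

theorem integrable_arcsineMeasure_iff (hab : a < b) {g : ℝ → E} :
    Integrable g (arcsineMeasure a b) ↔ Integrable (fun θ => g (anglePt a b θ)) angleMeasure := by
  rw [arcsineMeasure, integrable_withDensity_iff_integrable_smul' (by fun_prop)
    (.of_forall fun _ => ENNReal.ofReal_lt_top), ← IntegrableOn,
    integrableOn_Icc_iff_integrableOn_Ioo,
    ← (bijOn_anglePt hab).image_eq, integrableOn_image_iff_integrableOn_abs_deriv_smul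
    measurableSet_Ioo (fun θ _ => (hasDerivAt_anglePt a b θ).hasDerivWithinAt)
    (bijOn_anglePt hab).injOn, integrable_angleMeasure_iff, integrableOn_congr_fun
    (fun θ hθ => smul_density_comp_anglePt hab hθ g) measurableSet_Ioo]
  exact integrable_smul_iff (one_div_pos.2 Real.pi_pos).ne' _

variable {ι : Type*} {l : Filter ι} {A B : ι → ℝ}

theorem tendsto_anglePt (hA : Tendsto A l (𝓝 a)) (hB : Tendsto B l (𝓝 b)) (θ : ℝ) :
    Tendsto (fun i => anglePt (A i) (B i) θ) l (𝓝 (anglePt a b θ)) :=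
  ((hA.add hB).div_const 2).sub (((hB.sub hA).div_const 2).mul_const _)

/-- The measure `|r sin θ| dθ` on `(0, π)`. For `r > 0` it has the same null sets as `angleMeasure`,
and its image under `anglePt c d` is dominated by Lebesgue measure as soon as `r ≤ (d - c) / 2`. -/
def sinMeasure (r : ℝ) : Measure ℝ :=
  (volume.restrict (Ioo 0 Real.pi)).withDensity fun θ => ENNReal.ofReal |r * Real.sin θ|

instance (r : ℝ) : IsFiniteMeasure (sinMeasure r) := by
  refine isFiniteMeasure_withDensity_ofReal (Integrable.abs ?_).2
  have : IntegrableOn (fun θ => r * Real.sin θ) (Icc 0 Real.pi) :=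
    (by fun_prop : Continuous fun θ => r * Real.sin θ).integrableOn_Icc
  exact this.mono_set Ioo_subset_Icc_self

theorem angleMeasure_absolutelyContinuous_sinMeasure {r : ℝ} (hr : 0 < r) :
    angleMeasure ≪ sinMeasure r := by
  refine Measure.smul_absolutelyContinuous.trans
    (withDensity_absolutelyContinuous' (by fun_prop) ?_)
  filter_upwards [ae_restrict_mem measurableSet_Ioo] with θ hθ
  have := mul_pos hr (Real.sin_pos_of_mem_Ioo hθ)
  simpa using this.ne'

theorem map_anglePt_sinMeasure_le {r : ℝ} (hr : 0 < r) (hrab : r ≤ (b - a) / 2) :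
    (sinMeasure r).map (anglePt a b) ≤ volume.restrict (Ioo a b) := by
  have hab : a < b := by linarith
  rw [← (bijOn_anglePt hab).image_eq, ← map_withDensity_abs_deriv measurableSet_Ioo
    (fun θ _ => (hasDerivAt_anglePt a b θ).hasDerivWithinAt) (bijOn_anglePt hab).injOn
    (continuous_anglePt a b).measurable]
  refine Measure.map_mono (withDensity_mono (.of_forall fun θ => ?_))
    (continuous_anglePt a b).measurable
  simp only [abs_mul, abs_of_pos hr]
  gcongr
  exact hrab.trans (le_abs_self _)

theorem tendstoInMeasure_comp_anglePt [l.IsCountablyGenerated] (hab : a < b)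
    (hA : Tendsto A l (𝓝 a)) (hB : Tendsto B l (𝓝 b)) {g : ℝ → E} (hg : StronglyMeasurable g)
    (hgint : LocallyIntegrable g) :
    TendstoInMeasure angleMeasure (fun i θ => g (anglePt (A i) (B i) θ)) l
      (fun θ => g (anglePt a b θ)) := by
  have hr : 0 < (b - a) / 4 := by linarith
  have hgint' : IntegrableOn g (Icc (a - 1) (b + 1)) :=
    hgint.integrableOn_isCompact isCompact_Icc
  have map_le {c d : ℝ} (hc : a - 1 ≤ c) (hd : d ≤ b + 1) (hcd : (b - a) / 4 ≤ (d - c) / 2) :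
      (sinMeasure ((b - a) / 4)).map (anglePt c d) ≤ volume.restrict (Icc (a - 1) (b + 1)) :=
    (map_anglePt_sinMeasure_le hr hcd).trans
      (Measure.restrict_mono (Ioo_subset_Icc_self.trans (Icc_subset_Icc hc hd)) le_rfl)
  have hL1 : TendstoL1 (fun i => g ∘ anglePt (A i) (B i)) (g ∘ anglePt a b) l
      (sinMeasure ((b - a) / 4)) := by
    refine .comp_of_map_le hgint' (.of_forall fun i => (continuous_anglePt _ _).measurable)
      (continuous_anglePt a b).measurable ?_ (map_le (by linarith) (by linarith) (by linarith))
      (.of_forall fun θ => tendsto_anglePt hA hB θ)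
    filter_upwards [hA.eventually_const_le (by linarith : a - 1 < a),
      hB.eventually_le_const (by linarith : b < b + 1),
      (hB.sub hA).eventually_const_le (by linarith : (b - a) / 2 < b - a)] with i hAi hBi hABi
      using map_le hAi hBi (by linarith)
  have meas (c d : ℝ) : AEStronglyMeasurable (g ∘ anglePt c d) (sinMeasure ((b - a) / 4)) :=
    (hg.comp_measurable (continuous_anglePt c d).measurable).aestronglyMeasurable
  exact tendstoInMeasure_of_absolutelyContinuous
    (angleMeasure_absolutelyContinuous_sinMeasure hr) (tendstoInMeasure_of_tendsto_eLpNorm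
      one_ne_zero (fun i => meas _ _) (meas a b) hL1.tendsto_eLpNorm)

end Arcsine

section HarmonicExtension

variable {a b : ℝ} {z₀ : ℂ}

theorem sub_div_sub_mem_slitPlane (hab : a ≤ b) (hz : z₀ ∈ (Complex.ofReal '' Icc a b)ᶜ) :
    (z₀ - b) / (z₀ - a) ∈ Complex.slitPlane := by
  have hza : z₀ - a ≠ 0 := sub_ne_zero.2 fun h => hz ⟨a, left_mem_Icc.2 hab, h.symm⟩
  by_contra hslit
  rw [Complex.mem_slitPlane_iff_not_le_zero, not_not, Complex.le_def] at hslit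
  obtain ⟨t, ht, htz⟩ : ∃ t ≤ (0 : ℝ), (t : ℂ) = (z₀ - b) / (z₀ - a) :=
    ⟨_, hslit.1, Complex.ext rfl hslit.2.symm⟩
  rw [eq_div_iff hza] at htz
  have hpos : 0 < 1 - t := by linarith
  refine hz ⟨(b - t * a) / (1 - t), ⟨?_, ?_⟩, ?_⟩
  · rw [le_div_iff₀ hpos]
    linarith
  · rw [div_le_iff₀ hpos]
    nlinarith
  · have hne : (1 - t : ℂ) ≠ 0 := mod_cast hpos.ne'
    push_cast
    rw [div_eq_iff hne]
    linear_combination htz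

theorem cauchyT_eq_integral_angleMeasure (hab : a < b) (u : ℝ → ℝ) (z : ℂ) :
    cauchyT a b u z =
      ∫ θ, u (anglePt a b θ) • (z - (anglePt a b θ : ℂ))⁻¹ ∂angleMeasure := by
  simp only [cauchyT, integral_arcsineMeasure hab, Complex.real_smul, div_eq_mul_inv]

variable {ι : Type*} {l : Filter ι} {A B : ι → ℝ} {z : ι → ℂ}

theorem tendsto_wBranch (hab : a ≤ b) (hz₀ : z₀ ∈ (Complex.ofReal '' Icc a b)ᶜ)
    (hA : Tendsto A l (𝓝 a)) (hB : Tendsto B l (𝓝 b)) (hz : Tendsto z l (𝓝 z₀)) :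
    Tendsto (fun i => wBranch (A i) (B i) (z i)) l (𝓝 (wBranch a b z₀)) := by
  have hza : z₀ - a ≠ 0 := sub_ne_zero.2 fun h => hz₀ ⟨a, left_mem_Icc.2 hab, h.symm⟩
  have hzA := hz.sub (hA.ofReal)
  have hzB := hz.sub (hB.ofReal)
  exact hzA.mul
    (((hzB.div hzA hza).clog (sub_div_sub_mem_slitPlane hab hz₀)).const_mul _).cexp

variable {u : ι → ℝ → ℝ} {U : ℝ → ℝ}

theorem tendsto_cauchyT [l.IsCountablyGenerated] (hab : a < b)
    (hz₀ : z₀ ∈ (Complex.ofReal '' Icc a b)ᶜ) (hA : Tendsto A l (𝓝 a)) (hB : Tendsto B l (𝓝 b))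
    (hz : Tendsto z l (𝓝 z₀))
    (hu : TendstoL1 (fun i θ => u i (anglePt (A i) (B i) θ)) (fun θ => U (anglePt a b θ)) l
      angleMeasure) :
    Tendsto (fun i => cauchyT (A i) (B i) (u i) (z i)) l (𝓝 (cauchyT a b U z₀)) := by
  let kernel (w : ℝ × ℝ × ℂ) (θ : ℝ) : ℂ := (w.2.2 - (anglePt w.1 w.2.1 θ : ℂ))⁻¹
  have kernel_meas (w : ℝ × ℝ × ℂ) : AEStronglyMeasurable (kernel w) angleMeasure :=
    (((continuous_anglePt _ _).measurable.complex_ofReal.const_sub _).inv).aestronglyMeasurable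
  have kernel_cont (θ : ℝ) : ContinuousAt (Function.uncurry kernel) ((a, b, z₀), θ) := by
    refine ContinuousAt.inv₀ (Continuous.continuousAt ?_) (sub_ne_zero.2 fun h => ?_)
    · unfold anglePt
      fun_prop
    · exact hz₀ ⟨_, anglePt_mem_Icc hab.le θ, h.symm⟩
  have hlim := (hu.smul_continuousAt (hA.prodMk_nhds (hB.prodMk_nhds hz))
    (.of_forall kernel_meas) isCompact_Icc ae_angleMeasure_mem_Icc
    fun θ _ => kernel_cont θ).tendsto_integral
  rw [cauchyT_eq_integral_angleMeasure hab]
  refine hlim.congr' ?_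
  filter_upwards [hA.eventually_lt hB hab] with i hi
  exact (cauchyT_eq_integral_angleMeasure hi _ _).symm

theorem tendsto_harmExt [l.IsCountablyGenerated] (hab : a < b)
    (hz₀ : z₀ ∈ (Complex.ofReal '' Icc a b)ᶜ) (hA : Tendsto A l (𝓝 a)) (hB : Tendsto B l (𝓝 b))
    (hz : Tendsto z l (𝓝 z₀))
    (hu : TendstoL1 (fun i θ => u i (anglePt (A i) (B i) θ)) (fun θ => U (anglePt a b θ)) l
      angleMeasure) :
    Tendsto (fun i => harmExt (A i) (B i) (u i) (z i)) l (𝓝 (harmExt a b U z₀)) :=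
  (Complex.continuous_re.tendsto _).comp
    ((tendsto_wBranch hab.le hz₀ hA hB hz).mul (tendsto_cauchyT hab hz₀ hA hB hz hu))

theorem tendstoLocallyUniformlyOn_harmExt [l.IsCountablyGenerated] (hab : a < b)
    (hA : Tendsto A l (𝓝 a)) (hB : Tendsto B l (𝓝 b))
    (hu : TendstoL1 (fun i θ => u i (anglePt (A i) (B i) θ)) (fun θ => U (anglePt a b θ)) l
      angleMeasure) :
    TendstoLocallyUniformlyOn (fun i => harmExt (A i) (B i) (u i)) (harmExt a b U) l
      (Complex.ofReal '' Icc a b)ᶜ := by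
  rw [tendstoLocallyUniformlyOn_iff_forall_tendsto]
  intro z₀ hz₀
  have hlim : Tendsto (fun y : ι × ℂ => (harmExt a b U y.2, harmExt (A y.1) (B y.1) (u y.1) y.2))
      (l ×ˢ 𝓝 z₀) (𝓝 (harmExt a b U z₀, harmExt a b U z₀)) :=
    (tendsto_harmExt hab hz₀ tendsto_const_nhds tendsto_const_nhds tendsto_snd
      (.const hu.integrable _)).prodMk_nhds
    (tendsto_harmExt hab hz₀ (hA.comp tendsto_fst) (hB.comp tendsto_fst) tendsto_snd
      (hu.comp tendsto_fst))
  exact (hlim.mono_right (nhds_le_uniformity _)).mono_left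
    (Filter.prod_mono le_rfl nhdsWithin_le_nhds)

end HarmonicExtension

section BoundaryData

variable {a b p q : ℝ} {ι : Type*} {l : Filter ι} {A B : ι → ℝ}

theorem tendstoL1_comp_anglePt_of_tendsto_integral {E : Type*} [NormedAddCommGroup E]
    [NormedSpace ℝ E] {u : ℝ → E} (hab : a < b) (hA : Tendsto A l (𝓝 a)) (hB : Tendsto B l (𝓝 b))
    (hu : Integrable u (arcsineMeasure a b))
    (huAB : ∀ᶠ i in l, Integrable u (arcsineMeasure (A i) (B i)))
    (hlim : Tendsto (fun i => ∫ x, ‖u x - u (affIcc a b (A i) (B i) x)‖ ∂arcsineMeasure a b) l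
      (𝓝 0)) :
    TendstoL1 (fun i θ => u (anglePt (A i) (B i) θ)) (fun θ => u (anglePt a b θ)) l
      angleMeasure := by
  refine .of_tendsto_integral_norm_sub ((integrable_arcsineMeasure_iff hab).1 hu) ?_ ?_
  · filter_upwards [huAB, hA.eventually_lt hB hab] with i hi hABi
      using (integrable_arcsineMeasure_iff hABi).1 hi
  · simpa only [integral_arcsineMeasure hab, affIcc_anglePt hab, norm_sub_rev] using hlim

theorem tendstoL1_comp_anglePt_of_tendstoUniformlyOn [l.NeBot] [l.IsCountablyGenerated]
    {E : Type*} [NormedAddCommGroup E] {h : ι → ℝ → E} {hlim : ℝ → E}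
    (hab : a < b) (hpa : p < a) (hbq : b < q) (hA : Tendsto A l (𝓝 a)) (hB : Tendsto B l (𝓝 b))
    (hcont : ∀ᶠ i in l, ContinuousOn (h i) (Icc p q))
    (hunif : TendstoUniformlyOn h hlim l (Icc p q)) :
    TendstoL1 (fun i θ => h i (anglePt (A i) (B i) θ)) (fun θ => hlim (anglePt a b θ)) l
      angleMeasure := by
  have hlim_cont : ContinuousOn hlim (Icc p q) := hunif.continuousOn hcont.frequently
  obtain ⟨C, hC⟩ := isCompact_Icc.exists_bound_of_continuousOn hlim_cont
  have mem_Icc (θ : ℝ) : anglePt a b θ ∈ Icc p q :=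
    Icc_subset_Icc hpa.le hbq.le (anglePt_mem_Icc hab.le θ)
  have mem_Icc' : ∀ᶠ i in l, ∀ θ, anglePt (A i) (B i) θ ∈ Icc p q := by
    filter_upwards [hA.eventually_lt hB hab, hA.eventually_const_le hpa,
      hB.eventually_le_const hbq] with i hAB hpA hBq θ
      using Icc_subset_Icc hpA hBq (anglePt_mem_Icc hAB.le θ)
  refine .of_dominated (bound := fun _ => C + 1) (.of_bound ?_ C (.of_forall fun θ =>
    hC _ (mem_Icc θ))) ?_ (integrable_const _) ?_ (.of_forall fun θ => ?_)
  · exact (hlim_cont.comp_continuous (continuous_anglePt a b) mem_Icc).aestronglyMeasurable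
  · filter_upwards [hcont, mem_Icc'] with i hi hmem
    exact (hi.comp_continuous (continuous_anglePt _ _) hmem).aestronglyMeasurable
  · filter_upwards [Metric.tendstoUniformlyOn_iff.1 hunif 1 one_pos, mem_Icc'] with i hi hmem
    refine .of_forall fun θ =>
      (norm_le_norm_add_norm_sub' _ (hlim (anglePt (A i) (B i) θ))).trans ?_
    rw [← dist_eq_norm, dist_comm]
    exact add_le_add (hC _ (hmem θ)) (hi _ (hmem θ)).le
  · exact hunif.tendsto_comp (hlim_cont _ (mem_Icc θ)) <| tendsto_nhdsWithin_iff.2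
      ⟨tendsto_anglePt hA hB θ, mem_Icc'.mono fun _ hi => hi θ⟩

-- The indicator is there because `Real.log 0 = 0` breaks `log (v * w) = log v + log w` at `v = 0`.
theorem log_vDens_anglePt (μ : Measure ℝ) {θ : ℝ} (hab : a < b) (hθ : θ ∈ Ioo 0 Real.pi) :
    Real.log (vDens μ a b (anglePt a b θ)) = Real.log (lebDeriv μ (anglePt a b θ)) +
      (Real.log (Real.pi * ((b - a) / 2)) + Real.log (Real.sin θ)) *
        (Function.support (lebDeriv μ)).indicator 1 (anglePt a b θ) := by
  have hsin := Real.sin_pos_of_mem_Ioo hθ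
  have hlen : 0 < Real.pi * ((b - a) / 2) := mul_pos Real.pi_pos (by linarith)
  rw [vDens, sqrt_anglePt hab.le (Ioo_subset_Icc_self hθ)]
  by_cases hv : lebDeriv μ (anglePt a b θ) = 0
  · simp [hv]
  · rw [indicator_of_mem (Function.mem_support.2 hv), Pi.one_apply, mul_one,
      ← Real.log_mul hlen.ne' hsin.ne', ← Real.log_mul hv (mul_pos hlen hsin).ne']
    congr 1
    ring

theorem tendstoInMeasure_indicator_anglePt [l.IsCountablyGenerated] (hab : a < b)
    (hA : Tendsto A l (𝓝 a)) (hB : Tendsto B l (𝓝 b)) {s : Set ℝ} (hs : MeasurableSet s) :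
    TendstoInMeasure angleMeasure
      (fun i θ => s.indicator (1 : ℝ → ℝ) (anglePt (A i) (B i) θ)) l
      (fun θ => s.indicator 1 (anglePt a b θ)) :=
  tendstoInMeasure_comp_anglePt hab hA hB (stronglyMeasurable_one.indicator hs)
    ((locallyIntegrable_const 1).indicator hs)

theorem tendstoL1_log_length_add_log_sin [l.IsCountablyGenerated] (hab : a < b)
    (hA : Tendsto A l (𝓝 a)) (hB : Tendsto B l (𝓝 b)) :
    TendstoL1 (fun i θ => Real.log (Real.pi * ((B i - A i) / 2)) + Real.log (Real.sin θ))
      (fun θ => Real.log (Real.pi * ((b - a) / 2)) + Real.log (Real.sin θ)) l angleMeasure := by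
  have hlen : Real.pi * ((b - a) / 2) ≠ 0 := (mul_pos Real.pi_pos (by linarith)).ne'
  exact (TendstoL1.of_tendsto_const ((((hB.sub hA).div_const 2).const_mul _).log hlen)).add
    (.const integrable_log_sin_angleMeasure _)

theorem tendstoL1_log_vDens [l.IsCountablyGenerated] {μ : Measure ℝ} (hab : a < b)
    (hA : Tendsto A l (𝓝 a)) (hB : Tendsto B l (𝓝 b))
    (hlog : TendstoL1 (fun i θ => Real.log (lebDeriv μ (anglePt (A i) (B i) θ)))
      (fun θ => Real.log (lebDeriv μ (anglePt a b θ))) l angleMeasure) :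
    TendstoL1 (fun i θ => Real.log (vDens μ (A i) (B i) (anglePt (A i) (B i) θ)))
      (fun θ => Real.log (vDens μ a b (anglePt a b θ))) l angleMeasure := by
  have hsupp : MeasurableSet (Function.support (lebDeriv μ)) :=
    measurableSet_support (Measure.measurable_rnDeriv μ volume).ennreal_toReal
  let χ : ℝ → ℝ := (Function.support (lebDeriv μ)).indicator 1
  have χ_meas (c d : ℝ) : AEStronglyMeasurable (fun θ => χ (anglePt c d θ)) angleMeasure :=
    ((measurable_one.indicator hsupp).comp
      (continuous_anglePt c d).measurable).aestronglyMeasurable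
  have norm_χ_le (x : ℝ) : ‖χ x‖ ≤ 1 := (norm_indicator_le_norm_self _ _).trans_eq norm_one
  have hweight := tendstoL1_log_length_add_log_sin hab hA hB
  have hχ := TendstoL1.const_smul_of_tendstoInMeasure hweight.integrable
    (.of_forall fun i => χ_meas (A i) (B i)) (.of_forall fun i => .of_forall fun θ => norm_χ_le _)
    (χ_meas a b) (.of_forall fun θ => norm_χ_le _)
    (tendstoInMeasure_indicator_anglePt hab hA hB hsupp)
  have hprod := hweight.smul_bdd (.of_forall fun i => χ_meas (A i) (B i))
    (.of_forall fun i => .of_forall fun θ => norm_χ_le _) hχ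
  refine (hlog.add hprod).congr ?_ ?_
  · filter_upwards [hA.eventually_lt hB hab] with i hABi
    filter_upwards [ae_angleMeasure_mem_Ioo] with θ hθ using (log_vDens_anglePt μ hABi hθ).symm
  · filter_upwards [ae_angleMeasure_mem_Ioo] with θ hθ using (log_vDens_anglePt μ hab hθ).symm

end BoundaryData

theorem harmonic_extension_convergence_USz_general {ι : Type*} {l : Filter ι} [l.NeBot]
    [l.IsCountablyGenerated] {μ : Measure ℝ} [SigmaFinite μ] {a b : ℝ} (hab : a < b)
    {A B : ι → ℝ} (hA : Tendsto A l (𝓝 a)) (hB : Tendsto B l (𝓝 b)) (hSz : SzCond μ a b)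
    (hSzAB : ∀ᶠ i in l, SzCond μ (A i) (B i))
    (hlog : Tendsto (fun i => ∫ x,
      |Real.log (lebDeriv μ x) - Real.log (lebDeriv μ (affIcc a b (A i) (B i) x))|
        ∂arcsineMeasure a b) l (𝓝 0))
    {p q : ℝ} (hpa : p < a) (hbq : b < q) {h : ι → ℝ → ℝ} {hlim : ℝ → ℝ}
    (hcont : ∀ᶠ i in l, ContinuousOn (h i) (Icc p q))
    (hunif : TendstoUniformlyOn h hlim l (Icc p q)) :
    TendstoLocallyUniformlyOn
      (fun i => harmExt (A i) (B i) fun x => Real.log (vDens μ (A i) (B i) x) + h i x)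
      (harmExt a b fun x => Real.log (vDens μ a b x) + hlim x) l
      (Complex.ofReal '' Icc a b)ᶜ := by
  have hlogDeriv := tendstoL1_comp_anglePt_of_tendsto_integral hab hA hB hSz hSzAB hlog
  have hh := tendstoL1_comp_anglePt_of_tendstoUniformlyOn hab hpa hbq hA hB hcont hunif
  exact tendstoLocallyUniformlyOn_harmExt hab hA hB
    ((tendstoL1_log_vDens hab hA hB hlogDeriv).add hh)

/-- Lemma 3.8: for a uniformly Szegő measure, the harmonic extensions
`H_{Δ_n}(log v_n + h_n|_{Δ_n})` converge to `H_Δ(log v + h|_Δ)` locally uniformly off `Δ`. -/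
theorem harmonic_extension_convergence_USz
    (μ : Measure ℝ) (hfin : IsFiniteMeasure μ)
    (hbdd : Bornology.IsBounded (msupp μ))
    (a b : ℝ) (hab : a < b) (hsub : Set.Icc a b ⊆ convHullSupp μ)
    (hUSz : USzCond μ a b)
    -- intervals `Δ_n = [An n, Bn n] ⊆ Δ(μ)` converging to `Δ = [a,b]`
    (An Bn : ℕ → ℝ) (hABn : ∀ n, An n < Bn n)
    (hsubn : ∀ n, Set.Icc (An n) (Bn n) ⊆ convHullSupp μ)
    (hA : Tendsto An atTop (𝓝 a)) (hB : Tendsto Bn atTop (𝓝 b))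
    -- continuous functions converging uniformly on a closed interval containing `Δ`
    -- in its interior
    (p q : ℝ) (hpa : p < a) (hbq : b < q)
    (h : ℕ → ℝ → ℝ) (hlim : ℝ → ℝ)
    (hcont : ∀ n, ContinuousOn (h n) (Set.Icc p q))
    (hunif : TendstoUniformlyOn h hlim atTop (Set.Icc p q)) :
    TendstoLocallyUniformlyOn
      (fun n z => harmExt (An n) (Bn n)
        (fun x => Real.log (vDens μ (An n) (Bn n) x) + h n x) z)
      (fun z => harmExt a b (fun x => Real.log (vDens μ a b x) + hlim x) z)
      atTop (Complex.ofReal '' Set.Icc a b)ᶜ := by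
  obtain ⟨hSzn, hlog⟩ := hUSz.2 An Bn hABn hsubn hA hB
  exact harmonic_extension_convergence_USz_general hab hA hB hUSz.1 hSzn hlog hpa hbq
    (.of_forall hcont) hunif

end
end

section
/- Let Δ⃗_n = (Δ_{n,1},…,Δ_{n,d}) be collections of pairwise disjoint closed intervals converging componentwise to pairwise disjoint closed intervals Δ⃗ = (Δ_1,…,Δ_d), and let 𝔅_n be either C(Δ⃗_n) or C¹(Δ⃗_n). Then there is a constant C, independent of n, such that ‖(I − ℋ_{Δ⃗_n})^{−1}‖_{𝔅_n} ≤ C for all n. Moreover, if Δ⃗′ = (Δ′_1,…,Δ′_d) are pairwise disjoint closed intervals with Δ_{n,i} ⊆ Δ′_i for all n and i, and 𝔅′ is either C(Δ⃗′) or C¹(Δ⃗′), then there is a constant C′, independent of n, such that ‖(I − ℋ_{Δ⃗_n,Δ⃗′})^{−1}‖_{𝔅′} ≤ C′ for all n. -/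
open MeasureTheory Set Filter Topology Polynomial

noncomputable section

/-- Uniform invertibility bound for the family of operators `u ↦ calH d A' B' u` acting on
vector functions over the intervals `[A i, B i]`, with membership `mem` and norm `nrm`:
`I − ℋ` is surjective and `‖(I − ℋ)⁻¹‖ ≤ C`. -/
def InvBoundedBy (d : ℕ) (A' B' A B : Fin d → ℝ)
    (mem : (Fin d → ℝ → ℝ) → Prop) (nrm : (Fin d → ℝ → ℝ) → ℝ) (C : ℝ) : Prop :=
  (∀ a, mem a → ∃ u, mem u ∧
    ∀ i, ∀ x ∈ Set.Icc (A i) (B i), u i x = calH d A' B' u i x + a i x) ∧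
  (∀ u a, mem u → mem a →
    (∀ i, ∀ x ∈ Set.Icc (A i) (B i), u i x = calH d A' B' u i x + a i x) →
    nrm u ≤ C * nrm a)

/-!
The operator `ℋ` contracts derivatives. Integration by parts against the Poisson kernel of the
complement of `[A j, B j]` turns a bound `|u_j' t| (t - A j) (B j - t) ≤ q (B j - A j)` into the
bound `q (B j - A j) / ((x - A j) (x - B j))` for the derivative of `H_{Δ_j} u_j` at `x ∈ Δ_i`. The
map `t ↦ (x - t)⁻¹` shows that the sum of `(B j - A j) / ((x - A j) (x - B j))` over `j ≠ i` is at
most `(B i - A i) / ((x - A i) (B i - x))`, so each application of `ℋ` halves `q`, and `ℋ ^ n u`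
approaches the constant vectors at a geometric rate. On constant vectors `ℋ` is a matrix annihilated
by a polynomial `p` with `p 1 ≠ 0`; hence `ℋ ^ n p(ℋ) ℋ ^ 2` decays geometrically, and its Neumann
series together with the quotient of `p(X) X ^ 2` by `X - 1` inverts `1 - ℋ`.

The constants depend only on `d`, on a lower bound for the distances between the intervals and on
an upper bound for their lengths, and both are uniform along convergent sequences. A solution on
larger intervals `Δ'` is recovered from its restriction to `Δ` by `u = ℋ u + a`.
-/

section ParametricIntegral

variable {Y E : Type*} [TopologicalSpace Y] [T2Space Y] [MeasurableSpace Y] [OpensMeasurableSpace Y]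
  [NormedAddCommGroup E] [NormedSpace ℝ E] {μ : Measure Y} [IsFiniteMeasureOnCompacts μ] {K : Set Y}

theorem continuousOn_setIntegral_of_continuousOn_prod {X : Type*} [TopologicalSpace X]
    [FirstCountableTopology X] [LocallyCompactSpace X] {U : Set X} {F : X → Y → E}
    (hU : IsOpen U) (hK : IsCompact K) (hF : ContinuousOn (Function.uncurry F) (U ×ˢ K)) :
    ContinuousOn (fun x => ∫ y in K, F x y ∂μ) U := by
  intro x hx
  obtain ⟨V, hV, hVU, hVc⟩ := local_compact_nhds (hU.mem_nhds hx)
  obtain ⟨M, hM⟩ := (hVc.prod hK).exists_bound_of_continuousOn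
    (hF.mono (prod_mono_left hVU))
  refine ContinuousAt.continuousWithinAt (continuousAt_of_dominated (bound := fun _ => M)
    ?_ ?_ (integrableOn_const hK.measure_ne_top) ?_)
  · filter_upwards [hU.mem_nhds hx] with y hy using
      (hF.uncurry_left y hy).aestronglyMeasurable_of_isCompact hK hK.measurableSet
  · filter_upwards [hV] with y hy
    filter_upwards [ae_restrict_mem hK.measurableSet] with t ht using hM (y, t) ⟨hy, ht⟩
  · filter_upwards [ae_restrict_mem hK.measurableSet] with t ht
    exact (hF.uncurry_right t ht).continuousAt (hU.mem_nhds hx)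

theorem hasDerivAt_setIntegral_of_continuousOn_prod {𝕜 : Type*} [RCLike 𝕜] [NormedSpace 𝕜 E]
    {U : Set 𝕜} {F F' : 𝕜 → Y → E} {x : 𝕜} (hU : IsOpen U) (hK : IsCompact K)
    (hF : ∀ y ∈ U, ContinuousOn (F y) K)
    (hF' : ContinuousOn (Function.uncurry F') (U ×ˢ K))
    (hderiv : ∀ y ∈ U, ∀ t ∈ K, HasDerivAt (F · t) (F' y t) y) (hx : x ∈ U) :
    HasDerivAt (fun y => ∫ t in K, F y t ∂μ) (∫ t in K, F' x t ∂μ) x := by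
  obtain ⟨V, hV, hVU, hVc⟩ := local_compact_nhds (hU.mem_nhds hx)
  obtain ⟨M, hM⟩ := (hVc.prod hK).exists_bound_of_continuousOn
    (hF'.mono (prod_mono_left hVU))
  refine (hasDerivAt_integral_of_dominated_loc_of_deriv_le (bound := fun _ => M) hV ?_
    ((hF x hx).integrableOn_compact hK)
    ((hF'.uncurry_left x hx).aestronglyMeasurable_of_isCompact hK hK.measurableSet) ?_
    (integrableOn_const hK.measure_ne_top) ?_).2
  · filter_upwards [hU.mem_nhds hx] with y hy using
      (hF y hy).aestronglyMeasurable_of_isCompact hK hK.measurableSet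
  · filter_upwards [ae_restrict_mem hK.measurableSet] with t ht y hy using hM (y, t) ⟨hy, ht⟩
  · filter_upwards [ae_restrict_mem hK.measurableSet] with t ht y hy using hderiv y (hVU hy) t ht

end ParametricIntegral

section DisjointIntervals

theorem sub_ne_zero_of_notMem {G : Type*} [AddGroup G] {s : Set G} {x t : G} (hx : x ∉ s)
    (ht : t ∈ s) : x - t ≠ 0 :=
  sub_ne_zero.2 (ne_of_mem_of_not_mem ht hx).symm

variable {ι : Type*} {s : Finset ι} {l r : ι → ℝ}

theorem sum_sub_le_of_pairwiseDisjoint_Icc {c d : ℝ} (hcd : c ≤ d)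
    (hdisj : (s : Set ι).PairwiseDisjoint fun i => Icc (l i) (r i))
    (hsub : ∀ i ∈ s, Icc (l i) (r i) ⊆ Icc c d) : ∑ i ∈ s, (r i - l i) ≤ d - c := by
  calc ∑ i ∈ s, (r i - l i)
      ≤ ∑ i ∈ s, volume.real (Icc (l i) (r i)) :=
        Finset.sum_le_sum fun i _ => by rw [Real.volume_real_Icc]; exact le_max_left _ _
    _ = volume.real (⋃ i ∈ s, Icc (l i) (r i)) :=
        (measureReal_biUnion_finset hdisj (fun _ _ => measurableSet_Icc)
          fun _ _ => measure_Icc_lt_top.ne).symm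
    _ ≤ volume.real (Icc c d) := measureReal_mono (iUnion₂_subset hsub) measure_Icc_lt_top.ne
    _ = d - c := Real.volume_real_Icc_of_le hcd

theorem Icc_inv_sub_subset_image {a b x : ℝ} (hab : a ≤ b) (hx : x ∉ Icc a b) :
    Icc (x - a)⁻¹ (x - b)⁻¹ ⊆ (fun t => (x - t)⁻¹) '' Icc a b := by
  refine intermediate_value_Icc hab (ContinuousOn.inv₀ (by fun_prop) fun t ht h => hx ?_)
  rwa [sub_eq_zero.1 h]

theorem inv_sub_mem_Icc_of_notMem {a b x t : ℝ} (hx : x ∈ Ioo a b) (ht : t ∉ Icc a b) :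
    (x - t)⁻¹ ∈ Icc (x - b)⁻¹ (x - a)⁻¹ := by
  have hxa : 0 < x - a := sub_pos.2 hx.1
  have hxb : x - b < 0 := sub_neg.2 hx.2
  rcases lt_or_ge t a with hta | hta
  · have hxt : x - a ≤ x - t := by linarith
    exact ⟨(inv_neg''.2 hxb).le.trans (inv_pos.2 (hxa.trans_le hxt)).le, inv_anti₀ hxa hxt⟩
  · have hbt : b < t := not_le.1 fun h => ht ⟨hta, h⟩
    have hxt : x - t < 0 := by linarith [hx.2]
    exact ⟨(inv_le_inv_of_neg hxb hxt).2 (by linarith),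
      (inv_neg''.2 hxt).le.trans (inv_pos.2 hxa).le⟩

theorem sum_div_le_of_pairwiseDisjoint_Icc {a b x : ℝ} (hx : x ∈ Ioo a b)
    (hlr : ∀ i ∈ s, l i ≤ r i)
    (hdisj : (s : Set ι).PairwiseDisjoint fun i => Icc (l i) (r i))
    (hab : ∀ i ∈ s, Disjoint (Icc (l i) (r i)) (Icc a b)) :
    ∑ i ∈ s, (r i - l i) / ((x - l i) * (x - r i)) ≤ (b - a) / ((x - a) * (b - x)) := by
  have hxi : ∀ i ∈ s, x ∉ Icc (l i) (r i) := fun i hi h =>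
    (hab i hi).notMem_of_mem_left h (Ioo_subset_Icc_self hx)
  have hlength : ∀ i ∈ s, (r i - l i) / ((x - l i) * (x - r i)) = (x - r i)⁻¹ - (x - l i)⁻¹ := by
    intro i hi
    rw [inv_sub_inv (sub_ne_zero_of_notMem (hxi i hi) (right_mem_Icc.2 (hlr i hi)))
      (sub_ne_zero_of_notMem (hxi i hi) (left_mem_Icc.2 (hlr i hi)))]
    ring_nf
  have hinj : Function.Injective fun t : ℝ => (x - t)⁻¹ := fun s t h =>
    sub_right_injective (inv_injective h)
  rw [Finset.sum_congr rfl hlength]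
  -- `t ↦ (x - t)⁻¹` inverts the exterior of `[a, b]` into the single interval
  -- `[(x - b)⁻¹, (x - a)⁻¹]`, where the images of the `[l i, r i]` stay disjoint.
  calc ∑ i ∈ s, ((x - r i)⁻¹ - (x - l i)⁻¹)
      ≤ (x - a)⁻¹ - (x - b)⁻¹ := by
        refine sum_sub_le_of_pairwiseDisjoint_Icc
          ((inv_neg''.2 (sub_neg.2 hx.2)).le.trans (inv_pos.2 (sub_pos.2 hx.1)).le)
          (fun i hi j hj hij => ?_) fun i hi => ?_
        · exact ((disjoint_image_iff hinj).2 (hdisj hi hj hij)).mono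
            (Icc_inv_sub_subset_image (hlr i hi) (hxi i hi))
            (Icc_inv_sub_subset_image (hlr j hj) (hxi j hj))
        · refine (Icc_inv_sub_subset_image (hlr i hi) (hxi i hi)).trans ?_
          rintro _ ⟨t, ht, rfl⟩
          exact inv_sub_mem_Icc_of_notMem hx ((hab i hi).notMem_of_mem_left ht)
    _ = (b - a) / ((x - a) * (b - x)) := by
        rw [inv_sub_inv (sub_pos.2 hx.1).ne' (sub_neg.2 hx.2).ne, ← neg_sub b x,
          mul_neg, div_neg, ← neg_div]
        ring_nf

end DisjointIntervals

section NeumannSeries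

theorem pow_mul_aeval_X_sq_mul {R : Type*} [Ring R] [Algebra ℝ R] (k : R) (q : ℝ[X]) (n : ℕ) :
    k ^ n * aeval k (X ^ 2 * q) = aeval k q * k ^ (n + 2) := by
  simp only [← aeval_X_pow (R := ℝ) k, ← map_mul]
  congr 1
  ring

variable {R : Type*} [NormedRing R] [NormedAlgebra ℝ R]

theorem exists_inverse_one_sub_of_norm_pow_mul_le [CompleteSpace R] {k g p : R} {c D r : ℝ}
    (hc : c ≠ 0) (hgk : g * (1 - k) = c • 1 - p) (hkg : (1 - k) * g = c • 1 - p)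
    (hkp : Commute k p) (hD : ∀ n, ‖k ^ n * p‖ ≤ D * r ^ n) (hr0 : 0 ≤ r) (hr1 : r < 1) :
    ∃ y : R, y * (1 - k) = 1 ∧ (1 - k) * y = 1 ∧ ‖y‖ ≤ |c|⁻¹ * (D * (1 - r)⁻¹ + ‖g‖) := by
  have hgeom := (hasSum_geometric_of_lt_one hr0 hr1).mul_left D
  have hsum : Summable fun n => k ^ n * p := .of_norm_bounded hgeom.summable hD
  set S := ∑' n, k ^ n * p
  have hkS : k * S = S - p := by
    rw [eq_sub_iff_add_eq', ← hsum.tsum_mul_left]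
    simp only [← mul_assoc, ← pow_succ']
    simpa using (hsum.tsum_eq_zero_add).symm
  have hSk : S * k = k * S := by
    rw [← hsum.tsum_mul_left, ← hsum.tsum_mul_right]
    exact tsum_congr fun n => by rw [mul_assoc, ← hkp.eq, ← mul_assoc, ← mul_assoc, ← pow_succ,
      pow_succ']
  refine ⟨c⁻¹ • (S + g), ?_, ?_, ?_⟩
  · rw [smul_mul_assoc, add_mul, hgk, mul_sub, mul_one, hSk, hkS, sub_sub_cancel,
      add_sub_cancel, inv_smul_smul₀ hc]
  · rw [mul_smul_comm, mul_add, hkg, sub_mul, one_mul, hkS, sub_sub_cancel,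
      add_sub_cancel, inv_smul_smul₀ hc]
  · rw [norm_smul, norm_inv, Real.norm_eq_abs]
    gcongr
    exact (norm_add_le _ _).trans (add_le_add_left (tsum_of_norm_bounded hgeom hD) _)

/-- The value at `m` of the polynomial whose coefficients are the absolute values of those of `q`;
it bounds `‖q(k)‖` for `‖k‖ ≤ m`, independently of the ring in which `k` lies. -/
def absCoeffEval (q : ℝ[X]) (m : ℝ) : ℝ :=
  q.sum fun n c => |c| * m ^ n

theorem norm_aeval_le_absCoeffEval (h1 : ‖(1 : R)‖ ≤ 1) {k : R} {m : ℝ} (hk : ‖k‖ ≤ m)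
    (q : ℝ[X]) : ‖aeval k q‖ ≤ absCoeffEval q m := by
  have hpow : ∀ n, ‖k ^ n‖ ≤ m ^ n := fun n => by
    rcases n.eq_zero_or_pos with rfl | hn
    · simpa using h1
    · exact (norm_pow_le' k hn).trans (by gcongr)
  rw [aeval_eq_sum_range, absCoeffEval, sum_over_range _ fun n => by rw [abs_zero, zero_mul]]
  refine norm_sum_le_of_le _ fun n _ => ?_
  rw [norm_smul, Real.norm_eq_abs]
  gcongr
  exact hpow n

theorem exists_inverse_one_sub_of_norm_aeval_le [CompleteSpace R] (h1 : ‖(1 : R)‖ ≤ 1) {k : R}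
    {m : ℝ} (hk : ‖k‖ ≤ m) {q : ℝ[X]} (hq : q.eval 1 ≠ 0) {D r : ℝ}
    (hD : ∀ n, ‖k ^ n * aeval k q‖ ≤ D * r ^ n) (hr0 : 0 ≤ r) (hr1 : r < 1) :
    ∃ y : R, y * (1 - k) = 1 ∧ (1 - k) * y = 1 ∧
      ‖y‖ ≤ |q.eval 1|⁻¹ * (D * (1 - r)⁻¹ + absCoeffEval (q /ₘ (X - C 1)) m) := by
  set g := aeval k (q /ₘ (X - C 1))
  have hcomm : ∀ p : ℝ[X], Commute k (aeval k p) := fun p => by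
    simpa using (Commute.all X p).map (aeval k)
  have hdiv : (1 - k) * g = q.eval 1 • 1 - aeval k q := by
    have := congrArg (aeval k) (modByMonic_add_div q (X - C 1))
    rw [modByMonic_X_sub_C_eq_C_eval, map_add, map_mul, map_sub, aeval_X, aeval_C, aeval_C,
      map_one, Algebra.algebraMap_eq_smul_one] at this
    rw [← this, ← sub_sub, sub_self, zero_sub, ← neg_mul, neg_sub]
  obtain ⟨y, hl, hr, hy⟩ := exists_inverse_one_sub_of_norm_pow_mul_le hq
    (((Commute.one_left g).sub_left (hcomm _)).eq.symm.trans hdiv) hdiv (hcomm q) hD hr0 hr1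
  refine ⟨y, hl, hr, hy.trans ?_⟩
  gcongr
  exact norm_aeval_le_absCoeffEval h1 hk _

end NeumannSeries

theorem contDiffOn_one_of_hasDerivAt {E : Type*} [NormedAddCommGroup E] [NormedSpace ℝ E]
    {f f' : ℝ → E} {s : Set ℝ} (hs : UniqueDiffOn ℝ s) (hf : ∀ x ∈ s, HasDerivAt f (f' x) x)
    (hf' : ContinuousOn f' s) : ContDiffOn ℝ 1 f s :=
  (contDiffOn_one_iff_derivWithin hs).2
    ⟨fun x hx => (hf x hx).differentiableAt.differentiableWithinAt,
      hf'.congr fun x hx => (hf x hx).hasDerivWithinAt.derivWithin (hs x hx)⟩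

/-! ### The harmonic extension on the real line -/

section OneInterval

variable {a b x t : ℝ}

/-- The density of the arcsine distribution on `[a, b]`. -/
def arcsineDensity (a b t : ℝ) : ℝ := 1 / (Real.pi * Real.sqrt ((t - a) * (b - t)))

theorem arcsineDensity_nonneg (a b t : ℝ) : 0 ≤ arcsineDensity a b t := by
  unfold arcsineDensity; positivity

theorem measurable_arcsineDensity (a b : ℝ) : Measurable (arcsineDensity a b) := by
  unfold arcsineDensity; fun_prop

theorem integral_arcsineMeasure_s8 (hab : a ≤ b) (f : ℝ → ℝ) :
    ∫ t, f t ∂(arcsineMeasure a b) = ∫ t in a..b, arcsineDensity a b t * f t := by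
  change ∫ t, f t ∂((volume.restrict (Icc a b)).withDensity
    fun t => ENNReal.ofReal (arcsineDensity a b t)) = _
  rw [integral_withDensity_eq_integral_toReal_smul
    (measurable_arcsineDensity a b).ennreal_ofReal (by simp),
    intervalIntegral.integral_of_le hab, integral_Icc_eq_integral_Ioc]
  simp only [ENNReal.toReal_ofReal (arcsineDensity_nonneg a b _), smul_eq_mul]

theorem integrable_arcsineMeasure_iff_s8 (hab : a ≤ b) {f : ℝ → ℝ} :
    Integrable f (arcsineMeasure a b) ↔
      IntervalIntegrable (fun t => arcsineDensity a b t * f t) volume a b := by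
  change Integrable f ((volume.restrict (Icc a b)).withDensity
    fun t => ENNReal.ofReal (arcsineDensity a b t)) ↔ _
  rw [integrable_withDensity_iff_integrable_smul'
    (measurable_arcsineDensity a b).ennreal_ofReal (by simp),
    intervalIntegrable_iff_integrableOn_Icc_of_le hab]
  simp only [ENNReal.toReal_ofReal (arcsineDensity_nonneg a b _), smul_eq_mul, IntegrableOn]

theorem arcsineMeasure_absolutelyContinuous (a b : ℝ) :
    arcsineMeasure a b ≪ volume.restrict (Icc a b) :=
  withDensity_absolutelyContinuous _ _

theorem ae_mem_Icc_arcsineMeasure (a b : ℝ) : ∀ᵐ t ∂(arcsineMeasure a b), t ∈ Icc a b :=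
  arcsineMeasure_absolutelyContinuous a b (ae_restrict_mem measurableSet_Icc)

theorem restrict_arcsineMeasure (a b : ℝ) :
    (arcsineMeasure a b).restrict (Icc a b) = arcsineMeasure a b :=
  Measure.restrict_eq_self_of_ae_mem (ae_mem_Icc_arcsineMeasure a b)

/-- The values of `wBranch a b` on the real line off `[a, b]`. -/
def realBranch (a b x : ℝ) : ℝ := (x - a) * Real.sqrt ((x - b) / (x - a))

theorem lt_or_lt_of_notMem_Icc (hx : x ∉ Icc a b) : x < a ∨ b < x := by
  simpa only [mem_Icc, not_and_or, not_le] using hx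

theorem sub_mul_sub_pos_of_notMem_Icc (hab : a ≤ b) (hx : x ∉ Icc a b) :
    0 < (x - a) * (x - b) := by
  rcases lt_or_lt_of_notMem_Icc hx with h | h <;> nlinarith

theorem sub_div_sub_pos_of_notMem_Icc (hab : a ≤ b) (hx : x ∉ Icc a b) :
    0 < (x - b) / (x - a) := by
  rcases lt_or_lt_of_notMem_Icc hx with h | h
  · exact div_pos_of_neg_of_neg (by linarith) (by linarith)
  · exact div_pos (by linarith) (by linarith)

theorem realBranch_sq (hab : a ≤ b) (hx : x ∉ Icc a b) :
    realBranch a b x ^ 2 = (x - a) * (x - b) := by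
  have hxa : x - a ≠ 0 := sub_ne_zero_of_notMem hx (left_mem_Icc.2 hab)
  rw [realBranch, mul_pow, Real.sq_sqrt (sub_div_sub_pos_of_notMem_Icc hab hx).le]
  field_simp

theorem hasDerivAt_realBranch (hab : a ≤ b) (hx : x ∉ Icc a b) :
    HasDerivAt (realBranch a b) (realBranch a b x * (((x - a)⁻¹ + (x - b)⁻¹) / 2)) x := by
  have hxa : x - a ≠ 0 := sub_ne_zero_of_notMem hx (left_mem_Icc.2 hab)
  have hxb : x - b ≠ 0 := sub_ne_zero_of_notMem hx (right_mem_Icc.2 hab)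
  have hratio := sub_div_sub_pos_of_notMem_Icc hab hx
  have hid := hasDerivAt_id x
  refine ((hid.sub_const a).mul
    (((hid.sub_const b).div (hid.sub_const a) hxa).sqrt hratio.ne')).congr_deriv ?_
  have hsqrt := (Real.sqrt_pos.2 hratio).ne'
  have hsq := Real.sq_sqrt hratio.le
  simp only [id, Pi.div_apply, realBranch]
  rw [eq_div_iff hxa] at hsq
  field_simp
  linear_combination (a - b) * hsq

theorem wBranch_ofReal (hab : a ≤ b) (hx : x ∉ Icc a b) :
    wBranch a b (x : ℂ) = (realBranch a b x : ℂ) := by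
  have hratio := sub_div_sub_pos_of_notMem_Icc hab hx
  have hcast : ((x : ℂ) - b) / ((x : ℂ) - a) = (((x - b) / (x - a) : ℝ) : ℂ) := by push_cast; rfl
  rw [wBranch, realBranch, hcast, ← Complex.ofReal_log hratio.le, Real.sqrt_eq_rpow,
    Real.rpow_def_of_pos hratio]
  push_cast
  ring_nf

/-- The Poisson kernel of the complement of `[a, b]`, at the real point `x ∉ [a, b]` and with
respect to the arcsine distribution, which is harmonic measure seen from infinity. -/
def slitKernel (a b x t : ℝ) : ℝ := realBranch a b x / (x - t)

theorem slitKernel_pos (hx : x ∉ Icc a b) (ht : t ∈ Icc a b) : 0 < slitKernel a b x t := by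
  have hsqrt := Real.sqrt_pos.2 (sub_div_sub_pos_of_notMem_Icc (ht.1.trans ht.2) hx)
  unfold slitKernel realBranch
  rcases lt_or_lt_of_notMem_Icc hx with h | h
  · exact div_pos_of_neg_of_neg (mul_neg_of_neg_of_pos (by linarith) hsqrt) (by linarith [ht.1])
  · exact div_pos (mul_pos (by linarith [ht.1.trans ht.2]) hsqrt) (by linarith [ht.2])

theorem continuousOn_slitKernel (hab : a ≤ b) :
    ContinuousOn (Function.uncurry (slitKernel a b)) ((Icc a b)ᶜ ×ˢ Icc a b) := by
  have hw : ContinuousOn (realBranch a b) (Icc a b)ᶜ :=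
    HasDerivAt.continuousOn fun x hx => hasDerivAt_realBranch hab hx
  exact (hw.comp continuousOn_fst fun p hp => hp.1).div (by fun_prop)
    fun p hp => sub_ne_zero_of_notMem hp.1 hp.2

/-- The Möbius transformation of `t` sending `a`, `b`, `x` to `-1`, `1`, `∞`. -/
def mobiusCoord (a b x t : ℝ) : ℝ :=
  ((t - a) * (x - b) - (b - t) * (x - a)) / ((b - a) * (x - t))

theorem hasDerivAt_mobiusCoord (hab : a < b) (hxt : x - t ≠ 0) :
    HasDerivAt (mobiusCoord a b x) (2 * ((x - a) * (x - b)) / ((b - a) * (x - t) ^ 2)) t := by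
  have hba : b - a ≠ 0 := (sub_pos.2 hab).ne'
  have hid := hasDerivAt_id t
  refine ((((hid.sub_const a).mul_const (x - b)).sub ((hid.const_sub b).mul_const (x - a))).div
    ((hid.const_sub x).const_mul (b - a)) (mul_ne_zero hba hxt)).congr_deriv ?_
  simp only [id, Pi.sub_apply]
  field_simp
  ring

theorem one_sub_mobiusCoord_sq (hab : a < b) (hx : x ∉ Icc a b) (ht : t ∈ Icc a b) :
    1 - mobiusCoord a b x t ^ 2 =
      (2 / (b - a) * slitKernel a b x t) ^ 2 * ((t - a) * (b - t)) := by
  have hxt : x - t ≠ 0 := sub_ne_zero_of_notMem hx ht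
  have hba : b - a ≠ 0 := (sub_pos.2 hab).ne'
  rw [mul_pow, slitKernel, div_pow _ (x - t), realBranch_sq hab.le hx, mobiusCoord]
  field_simp
  ring

theorem sqrt_one_sub_mobiusCoord_sq (hab : a < b) (hx : x ∉ Icc a b) (ht : t ∈ Icc a b) :
    √(1 - mobiusCoord a b x t ^ 2) =
      2 / (b - a) * slitKernel a b x t * √((t - a) * (b - t)) := by
  have hpos := mul_pos (div_pos two_pos (sub_pos.2 hab)) (slitKernel_pos hx ht)
  rw [one_sub_mobiusCoord_sq hab hx ht, Real.sqrt_mul (sq_nonneg _), Real.sqrt_sq hpos.le]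

theorem hasDerivAt_arcsin_mobiusCoord (hx : x ∉ Icc a b) (ht : t ∈ Ioo a b) :
    HasDerivAt (fun t => Real.arcsin (mobiusCoord a b x t) / Real.pi)
      (arcsineDensity a b t * slitKernel a b x t) t := by
  have hab : a < b := ht.1.trans ht.2
  have ht' := Ioo_subset_Icc_self ht
  have hxt : x - t ≠ 0 := sub_ne_zero_of_notMem hx ht'
  have hba : 0 < b - a := sub_pos.2 hab
  have hP := slitKernel_pos hx ht'
  have htt : 0 < (t - a) * (b - t) := mul_pos (sub_pos.2 ht.1) (sub_pos.2 ht.2)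
  have hlt : 0 < 1 - mobiusCoord a b x t ^ 2 := by
    rw [one_sub_mobiusCoord_sq hab hx ht']; positivity
  refine (((Real.hasDerivAt_arcsin (by rintro h; norm_num [h] at hlt)
    (by rintro h; norm_num [h] at hlt)).comp t
      (hasDerivAt_mobiusCoord hab hxt)).div_const Real.pi).congr_deriv ?_
  have hsq : (x - a) * (x - b) = (slitKernel a b x t * (x - t)) ^ 2 := by
    rw [slitKernel, div_mul_cancel₀ _ hxt, realBranch_sq hab.le hx]
  rw [sqrt_one_sub_mobiusCoord_sq hab hx ht', hsq, arcsineDensity]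
  field_simp [Real.sqrt_ne_zero'.2 htt, Real.pi_ne_zero]

theorem continuousOn_arcsin_mobiusCoord (hab : a < b) (hx : x ∉ Icc a b) :
    ContinuousOn (fun t => Real.arcsin (mobiusCoord a b x t) / Real.pi) (Icc a b) :=
  (Real.continuous_arcsin.comp_continuousOn (HasDerivAt.continuousOn fun _ ht =>
    hasDerivAt_mobiusCoord hab (sub_ne_zero_of_notMem hx ht))).div_const _

theorem intervalIntegrable_arcsineDensity_mul_slitKernel (hab : a < b) (hx : x ∉ Icc a b) :
    IntervalIntegrable (fun t => arcsineDensity a b t * slitKernel a b x t) volume a b := by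
  rw [intervalIntegrable_iff_integrableOn_Ioc_of_le hab.le]
  exact intervalIntegral.integrableOn_deriv_of_nonneg (continuousOn_arcsin_mobiusCoord hab hx)
    (fun t ht => hasDerivAt_arcsin_mobiusCoord hx ht) fun t ht =>
      mul_nonneg (arcsineDensity_nonneg a b t) (slitKernel_pos hx (Ioo_subset_Icc_self ht)).le

theorem integral_slitKernel (hab : a < b) (hx : x ∉ Icc a b) :
    ∫ t, slitKernel a b x t ∂(arcsineMeasure a b) = 1 := by
  have hba : b - a ≠ 0 := (sub_pos.2 hab).ne'
  have hxa : x - a ≠ 0 := sub_ne_zero_of_notMem hx (left_mem_Icc.2 hab.le)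
  have hxb : x - b ≠ 0 := sub_ne_zero_of_notMem hx (right_mem_Icc.2 hab.le)
  have hleft : mobiusCoord a b x a = -1 := by
    unfold mobiusCoord; field_simp; ring
  have hright : mobiusCoord a b x b = 1 := by
    unfold mobiusCoord; field_simp; ring
  rw [integral_arcsineMeasure_s8 hab.le, intervalIntegral.integral_eq_sub_of_hasDerivAt_of_le hab.le
    (continuousOn_arcsin_mobiusCoord hab hx) (fun t ht => hasDerivAt_arcsin_mobiusCoord hx ht)
    (intervalIntegrable_arcsineDensity_mul_slitKernel hab hx), hleft, hright,
    Real.arcsin_one, Real.arcsin_neg_one]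
  field_simp
  norm_num

instance isFiniteMeasure_arcsineMeasure (a b : ℝ) : IsFiniteMeasure (arcsineMeasure a b) := by
  rcases lt_or_ge a b with hab | hab
  · have hx : b + 1 ∉ Icc a b := fun h => by linarith [h.2]
    have hP : Integrable (slitKernel a b (b + 1)) (arcsineMeasure a b) :=
      (integrable_arcsineMeasure_iff_s8 hab.le).2
        (intervalIntegrable_arcsineDensity_mul_slitKernel hab hx)
    obtain ⟨M, hM⟩ := isCompact_Icc.exists_bound_of_continuousOn
      (((continuousOn_slitKernel hab.le).uncurry_left _ hx).inv₀
        fun t ht => (slitKernel_pos hx ht).ne')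
    refine (integrable_const_iff_isFiniteMeasure (one_ne_zero (α := ℝ))).1
      ((hP.const_mul M).mono' aestronglyMeasurable_const ?_)
    filter_upwards [ae_mem_Icc_arcsineMeasure a b] with t ht
    have hpos := slitKernel_pos hx ht
    have := hM t ht
    rw [Pi.inv_apply, norm_inv, Real.norm_of_nonneg hpos.le, inv_le_iff_one_le_mul₀ hpos] at this
    rwa [norm_one]
  · have hnull : volume.restrict (Icc a b) = 0 := by
      rw [Measure.restrict_eq_zero, Real.volume_Icc, ENNReal.ofReal_of_nonpos (by linarith)]
    rw [arcsineMeasure, hnull, withDensity_zero_left]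
    infer_instance

theorem integrable_arcsineMeasure_of_continuousOn {f : ℝ → ℝ}
    (hf : ContinuousOn f (Icc a b)) : Integrable f (arcsineMeasure a b) := by
  have := hf.integrableOn_Icc (μ := arcsineMeasure a b)
  rwa [IntegrableOn, restrict_arcsineMeasure] at this

theorem continuousOn_slitKernel_mul (hx : x ∉ Icc a b) {u : ℝ → ℝ}
    (hu : ContinuousOn u (Icc a b)) :
    ContinuousOn (fun t => slitKernel a b x t * u t) (Icc a b) := by
  rcases le_or_gt a b with hab | hab
  · exact ((continuousOn_slitKernel hab).uncurry_left x hx).mul hu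
  · simp [hab]

theorem harmExt_ofReal (hab : a ≤ b) (hx : x ∉ Icc a b) (u : ℝ → ℝ) :
    harmExt a b u (x : ℂ) = ∫ t, slitKernel a b x t * u t ∂(arcsineMeasure a b) := by
  have hcast : ∀ t : ℝ, (u t : ℂ) / ((x : ℂ) - (t : ℂ)) = ((u t / (x - t) : ℝ) : ℂ) := by
    intro t; push_cast; rfl
  simp_rw [harmExt, cauchyT, wBranch_ofReal hab hx, hcast]
  rw [integral_complex_ofReal, ← Complex.ofReal_mul, Complex.ofReal_re, ← integral_const_mul]
  exact integral_congr_ae (.of_forall fun t => by simp only [slitKernel]; ring)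

theorem harmExt_congr (hab : a ≤ b) (hx : x ∉ Icc a b) {u v : ℝ → ℝ} (huv : EqOn u v (Icc a b)) :
    harmExt a b u (x : ℂ) = harmExt a b v (x : ℂ) := by
  rw [harmExt_ofReal hab hx, harmExt_ofReal hab hx]
  refine integral_congr_ae ?_
  filter_upwards [ae_mem_Icc_arcsineMeasure a b] with t ht
  rw [huv ht]

theorem harmExt_add (hab : a ≤ b) (hx : x ∉ Icc a b) {u v : ℝ → ℝ}
    (hu : ContinuousOn u (Icc a b)) (hv : ContinuousOn v (Icc a b)) :
    harmExt a b (fun t => u t + v t) (x : ℂ) =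
      harmExt a b u (x : ℂ) + harmExt a b v (x : ℂ) := by
  simp only [harmExt_ofReal hab hx, mul_add]
  exact integral_add (integrable_arcsineMeasure_of_continuousOn (continuousOn_slitKernel_mul hx hu))
    (integrable_arcsineMeasure_of_continuousOn (continuousOn_slitKernel_mul hx hv))

theorem harmExt_const_mul (hab : a ≤ b) (hx : x ∉ Icc a b) (c : ℝ) (u : ℝ → ℝ) :
    harmExt a b (fun t => c * u t) (x : ℂ) = c * harmExt a b u (x : ℂ) := by
  simp only [harmExt_ofReal hab hx, mul_left_comm _ c, integral_const_mul]

theorem harmExt_const (hab : a < b) (hx : x ∉ Icc a b) (c : ℝ) :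
    harmExt a b (fun _ => c) (x : ℂ) = c := by
  rw [harmExt_ofReal hab.le hx, integral_mul_const, integral_slitKernel hab hx, one_mul]

/-- `∂/∂x` of `slitKernel a b x t`. -/
def slitKernelDeriv (a b x t : ℝ) : ℝ :=
  slitKernel a b x t * (((x - a)⁻¹ + (x - b)⁻¹) / 2 - (x - t)⁻¹)

theorem hasDerivAt_slitKernel (hx : x ∉ Icc a b) (ht : t ∈ Icc a b) :
    HasDerivAt (slitKernel a b · t) (slitKernelDeriv a b x t) x := by
  have hxt : x - t ≠ 0 := sub_ne_zero_of_notMem hx ht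
  refine ((hasDerivAt_realBranch (ht.1.trans ht.2) hx).div
    ((hasDerivAt_id x).sub_const t) hxt).congr_deriv ?_
  simp only [slitKernelDeriv, slitKernel, id]
  field_simp

theorem continuousOn_slitKernelDeriv (hab : a ≤ b) :
    ContinuousOn (Function.uncurry (slitKernelDeriv a b)) ((Icc a b)ᶜ ×ˢ Icc a b) := by
  have hinv : ∀ {f : ℝ × ℝ → ℝ}, ContinuousOn f ((Icc a b)ᶜ ×ˢ Icc a b) →
      (∀ p ∈ (Icc a b)ᶜ ×ˢ Icc a b, f p ∈ Icc a b) →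
      ContinuousOn (fun p => (p.1 - f p)⁻¹) ((Icc a b)ᶜ ×ˢ Icc a b) := fun hf hmem =>
    (continuousOn_fst.sub hf).inv₀ fun p hp => sub_ne_zero_of_notMem hp.1 (hmem p hp)
  exact (continuousOn_slitKernel hab).mul
    ((((hinv continuousOn_const fun _ _ => left_mem_Icc.2 hab).add
      (hinv continuousOn_const fun _ _ => right_mem_Icc.2 hab)).div_const 2).sub
        (hinv continuousOn_snd fun _ hp => hp.2))

/-- The derivative of `harmExt a b u` on the real line off `[a, b]`. -/
def harmExtDeriv (a b : ℝ) (u : ℝ → ℝ) (x : ℝ) : ℝ :=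
  ∫ t, slitKernelDeriv a b x t * u t ∂(arcsineMeasure a b)

theorem hasDerivAt_harmExt (hab : a ≤ b) {u : ℝ → ℝ} (hu : ContinuousOn u (Icc a b))
    (hx : x ∉ Icc a b) :
    HasDerivAt (fun y : ℝ => harmExt a b u (y : ℂ)) (harmExtDeriv a b u x) x := by
  have hopen : IsOpen (Icc a b)ᶜ := isClosed_Icc.isOpen_compl
  have hderiv := hasDerivAt_setIntegral_of_continuousOn_prod (μ := arcsineMeasure a b)
    (F := fun y t => slitKernel a b y t * u t)
    (F' := fun y t => slitKernelDeriv a b y t * u t) hopen isCompact_Icc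
    (fun y hy => continuousOn_slitKernel_mul hy hu)
    ((continuousOn_slitKernelDeriv hab).mul (hu.comp continuousOn_snd fun p hp => hp.2))
    (fun y hy t ht => (hasDerivAt_slitKernel hy ht).mul_const (u t)) hx
  rw [restrict_arcsineMeasure] at hderiv
  exact hderiv.congr_of_eventuallyEq (by
    filter_upwards [hopen.mem_nhds hx] with y hy using harmExt_ofReal hab hy u)

theorem continuousOn_harmExtDeriv (hab : a ≤ b) {u : ℝ → ℝ} (hu : ContinuousOn u (Icc a b)) :
    ContinuousOn (harmExtDeriv a b u) (Icc a b)ᶜ := by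
  have := continuousOn_setIntegral_of_continuousOn_prod (μ := arcsineMeasure a b)
    (F := fun y t => slitKernelDeriv a b y t * u t) isClosed_Icc.isOpen_compl isCompact_Icc
    ((continuousOn_slitKernelDeriv hab).mul (hu.comp continuousOn_snd fun p hp => hp.2))
  rwa [restrict_arcsineMeasure] at this

theorem abs_integral_slitKernel_mul_le (hab : a < b) (hx : x ∉ Icc a b) {f : ℝ → ℝ} {M : ℝ}
    (hf : ∀ t ∈ Icc a b, |f t| ≤ M) :
    |∫ t, slitKernel a b x t * f t ∂(arcsineMeasure a b)| ≤ M := by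
  have hint := integrable_arcsineMeasure_of_continuousOn
    ((continuousOn_slitKernel hab.le).uncurry_left x hx)
  calc |∫ t, slitKernel a b x t * f t ∂(arcsineMeasure a b)|
      ≤ ∫ t, slitKernel a b x t * M ∂(arcsineMeasure a b) := by
        rw [← Real.norm_eq_abs]
        refine norm_integral_le_of_norm_le (hint.mul_const M) ?_
        filter_upwards [ae_mem_Icc_arcsineMeasure a b] with t ht
        have hpos := slitKernel_pos hx ht
        rw [norm_mul, Real.norm_of_nonneg hpos.le]
        exact mul_le_mul_of_nonneg_left (hf t ht) hpos.le
    _ = M := by rw [integral_mul_const, integral_slitKernel hab hx, one_mul]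

theorem abs_harmExt_le (hab : a < b) (hx : x ∉ Icc a b) {u : ℝ → ℝ} {M : ℝ}
    (hu : ∀ t ∈ Icc a b, |u t| ≤ M) : |harmExt a b u (x : ℂ)| ≤ M := by
  rw [harmExt_ofReal hab.le hx]
  exact abs_integral_slitKernel_mul_le hab hx hu

theorem abs_harmExtDeriv_le (hab : a < b) (hx : x ∉ Icc a b) {u : ℝ → ℝ} {M δ : ℝ} (hδ : 0 < δ)
    (hdist : ∀ t ∈ Icc a b, δ ≤ |x - t|) (hu : ∀ t ∈ Icc a b, |u t| ≤ M) :
    |harmExtDeriv a b u x| ≤ 2 * M / δ := by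
  have hinv : ∀ t ∈ Icc a b, |(x - t)⁻¹| ≤ δ⁻¹ := fun t ht => by
    rw [abs_inv]; exact inv_anti₀ hδ (hdist t ht)
  have hfactor : ∀ t ∈ Icc a b, |((x - a)⁻¹ + (x - b)⁻¹) / 2 - (x - t)⁻¹| ≤ 2 * δ⁻¹ := by
    intro t ht
    have ha := abs_le.1 (hinv a (left_mem_Icc.2 hab.le))
    have hb := abs_le.1 (hinv b (right_mem_Icc.2 hab.le))
    have ht := abs_le.1 (hinv t ht)
    rw [abs_le]; constructor <;> linarith
  simp only [harmExtDeriv, slitKernelDeriv, mul_assoc]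
  refine abs_integral_slitKernel_mul_le hab hx fun t ht => ?_
  rw [abs_mul]
  calc _ ≤ 2 * δ⁻¹ * M := mul_le_mul (hfactor t ht) (hu t ht) (abs_nonneg _) (by positivity)
    _ = 2 * M / δ := by ring

/-- The flux of the kernel: a primitive in `t` of `arcsineDensity a b t * slitKernelDeriv a b x t`
that vanishes at both endpoints, so that integrating by parts against it moves the derivative of
`harmExt a b u` onto `u`. -/
def slitFlux (a b x t : ℝ) : ℝ := √((t - a) * (b - t)) / (Real.pi * realBranch a b x * (x - t))

theorem realBranch_ne_zero (hab : a ≤ b) (hx : x ∉ Icc a b) : realBranch a b x ≠ 0 := fun h => by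
  have hpos := slitKernel_pos hx (left_mem_Icc.2 hab)
  rw [slitKernel, h, zero_div] at hpos
  exact hpos.false

theorem continuousOn_slitFlux (hx : x ∉ Icc a b) : ContinuousOn (slitFlux a b x) (Icc a b) :=
  ContinuousOn.div (by fun_prop) (by fun_prop) fun _ ht =>
    mul_ne_zero (mul_ne_zero Real.pi_ne_zero (realBranch_ne_zero (ht.1.trans ht.2) hx))
      (sub_ne_zero_of_notMem hx ht)

theorem hasDerivAt_slitFlux (hx : x ∉ Icc a b) (ht : t ∈ Ioo a b) :
    HasDerivAt (slitFlux a b x) (arcsineDensity a b t * slitKernelDeriv a b x t) t := by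
  have hab : a ≤ b := (ht.1.trans ht.2).le
  have hw := realBranch_ne_zero hab hx
  have hxt : x - t ≠ 0 := sub_ne_zero_of_notMem hx (Ioo_subset_Icc_self ht)
  have hxa : x - a ≠ 0 := sub_ne_zero_of_notMem hx (left_mem_Icc.2 hab)
  have hxb : x - b ≠ 0 := sub_ne_zero_of_notMem hx (right_mem_Icc.2 hab)
  have htt : 0 < (t - a) * (b - t) := mul_pos (sub_pos.2 ht.1) (sub_pos.2 ht.2)
  have hsqrt := (Real.sqrt_pos.2 htt).ne'
  have hsqrt_sq := Real.sq_sqrt htt.le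
  have hw_sq := realBranch_sq hab hx
  have hid := hasDerivAt_id t
  refine ((((hid.sub_const a).mul (hid.const_sub b)).sqrt htt.ne').div
    ((hid.const_sub x).const_mul (Real.pi * realBranch a b x))
    (mul_ne_zero (mul_ne_zero Real.pi_ne_zero hw) hxt)).congr_deriv ?_
  simp only [id, Pi.mul_apply, arcsineDensity, slitKernelDeriv, slitKernel]
  generalize √((t - a) * (b - t)) = σ at hsqrt hsqrt_sq ⊢
  have := Real.pi_ne_zero
  field_simp
  rw [hsqrt_sq, hw_sq]
  ring

theorem slitFlux_eq (hx : x ∉ Icc a b) (ht : t ∈ Icc a b) :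
    slitFlux a b x t = arcsineDensity a b t * slitKernel a b x t *
      (((t - a) * (b - t)) / ((x - a) * (x - b))) := by
  have hab : a ≤ b := ht.1.trans ht.2
  have hw := realBranch_ne_zero hab hx
  have hxt : x - t ≠ 0 := sub_ne_zero_of_notMem hx ht
  rw [slitFlux, ← Real.div_sqrt, arcsineDensity, slitKernel, ← realBranch_sq hab hx]
  field_simp

theorem harmExtDeriv_eq_neg_integral_slitFlux_mul (hab : a ≤ b) (hx : x ∉ Icc a b) {u u' : ℝ → ℝ}
    (hu : ContinuousOn u (Icc a b)) (hderiv : ∀ t ∈ Ioo a b, HasDerivAt u (u' t) t)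
    (hu' : IntervalIntegrable u' volume a b) :
    harmExtDeriv a b u x = -∫ t in a..b, slitFlux a b x t * u' t := by
  have hker : Integrable (slitKernelDeriv a b x) (arcsineMeasure a b) :=
    integrable_arcsineMeasure_of_continuousOn
      ((continuousOn_slitKernelDeriv hab).uncurry_left x hx)
  have hparts := intervalIntegral.integral_mul_deriv_eq_deriv_mul_of_hasDerivAt
    (u := slitFlux a b x) (v := u) (u' := fun t => arcsineDensity a b t * slitKernelDeriv a b x t)
    (v' := u') (by rw [uIcc_of_le hab]; exact continuousOn_slitFlux hx)
    (by rwa [uIcc_of_le hab])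
    (fun t ht => hasDerivAt_slitFlux hx (by rwa [min_eq_left hab, max_eq_right hab] at ht))
    (fun t ht => hderiv t (by rwa [min_eq_left hab, max_eq_right hab] at ht))
    ((integrable_arcsineMeasure_iff_s8 hab).1 hker) hu'
  have hleft : slitFlux a b x a = 0 := by simp [slitFlux]
  have hright : slitFlux a b x b = 0 := by simp [slitFlux]
  rw [hparts, hleft, hright, harmExtDeriv, integral_arcsineMeasure_s8 hab]
  simp only [zero_mul, sub_self, zero_sub, neg_neg, mul_assoc]

theorem abs_harmExtDeriv_le_of_weighted (hab : a < b) (hx : x ∉ Icc a b) {u u' : ℝ → ℝ} {m : ℝ}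
    (hu : ContinuousOn u (Icc a b)) (hderiv : ∀ t ∈ Ioo a b, HasDerivAt u (u' t) t)
    (hu' : IntervalIntegrable u' volume a b)
    (hm : ∀ t ∈ Icc a b, |u' t| * ((t - a) * (b - t)) ≤ m) :
    |harmExtDeriv a b u x| ≤ m / ((x - a) * (x - b)) := by
  have hxx := sub_mul_sub_pos_of_notMem_Icc hab.le hx
  have hpointwise : ∀ t ∈ Icc a b, |slitFlux a b x t * u' t| ≤
      arcsineDensity a b t * slitKernel a b x t * (m / ((x - a) * (x - b))) := by
    intro t ht
    have hρP := mul_nonneg (arcsineDensity_nonneg a b t) (slitKernel_pos hx ht).le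
    have htt : 0 ≤ (t - a) * (b - t) := mul_nonneg (sub_nonneg.2 ht.1) (sub_nonneg.2 ht.2)
    rw [slitFlux_eq hx ht, abs_mul, abs_mul, abs_of_nonneg hρP,
      abs_of_nonneg (div_nonneg htt hxx.le), mul_assoc, div_mul_eq_mul_div,
      mul_comm _ |u' t|]
    gcongr
    exact hm t ht
  rw [harmExtDeriv_eq_neg_integral_slitFlux_mul hab.le hx hu hderiv hu', abs_neg]
  rw [← Real.norm_eq_abs]
  calc ‖∫ t in a..b, slitFlux a b x t * u' t‖
      ≤ ∫ t in a..b, arcsineDensity a b t * slitKernel a b x t * (m / ((x - a) * (x - b))) :=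
        intervalIntegral.norm_integral_le_of_norm_le hab.le
          (.of_forall fun t ht => hpointwise t (Ioc_subset_Icc_self ht))
          ((intervalIntegrable_arcsineDensity_mul_slitKernel hab hx).mul_const _)
    _ = m / ((x - a) * (x - b)) := by
        rw [intervalIntegral.integral_mul_const, ← integral_arcsineMeasure_s8 hab.le,
          integral_slitKernel hab hx, one_mul]

end OneInterval

/-! ### The operator `ℋ` -/

section CalH

variable {d : ℕ} {A B : Fin d → ℝ} {i : Fin d} {x : ℝ} {u v : Fin d → ℝ → ℝ}

theorem calH_congr (hAB : ∀ j, A j ≤ B j) (hx : ∀ j ≠ i, x ∉ Icc (A j) (B j))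
    (huv : ∀ j, EqOn (u j) (v j) (Icc (A j) (B j))) : calH d A B u i x = calH d A B v i x := by
  simp only [calH]
  congr 1
  exact Finset.sum_congr rfl fun j hj =>
    harmExt_congr (hAB j) (hx j (Finset.ne_of_mem_erase hj)) (huv j)

theorem calH_add (hAB : ∀ j, A j ≤ B j) (hx : ∀ j ≠ i, x ∉ Icc (A j) (B j))
    (hu : memVecC d A B u) (hv : memVecC d A B v) :
    calH d A B (fun j t => u j t + v j t) i x = calH d A B u i x + calH d A B v i x := by
  simp only [calH, ← mul_add, ← Finset.sum_add_distrib]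
  congr 1
  exact Finset.sum_congr rfl fun j hj =>
    harmExt_add (hAB j) (hx j (Finset.ne_of_mem_erase hj)) (hu j) (hv j)

theorem calH_const_mul (hAB : ∀ j, A j ≤ B j) (hx : ∀ j ≠ i, x ∉ Icc (A j) (B j)) (c : ℝ)
    (u : Fin d → ℝ → ℝ) : calH d A B (fun j t => c * u j t) i x = c * calH d A B u i x := by
  rw [calH, calH, mul_left_comm, Finset.mul_sum _ _ c]
  congr 1
  exact Finset.sum_congr rfl fun j hj =>
    harmExt_const_mul (hAB j) (hx j (Finset.ne_of_mem_erase hj)) c (u j)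

theorem calH_const (hAB : ∀ j, A j < B j) (hx : ∀ j ≠ i, x ∉ Icc (A j) (B j)) (c : Fin d → ℝ) :
    calH d A B (fun j _ => c j) i x = (c i - ∑ j, c j) / 2 := by
  have hsum : ∑ j ∈ Finset.univ.erase i, harmExt (A j) (B j) (fun _ => c j) (x : ℂ) =
      ∑ j ∈ Finset.univ.erase i, c j := Finset.sum_congr rfl fun j hj =>
    harmExt_const (hAB j) (hx j (Finset.ne_of_mem_erase hj)) (c j)
  rw [calH, hsum, Finset.sum_erase_eq_sub (Finset.mem_univ i)]
  ring

theorem sum_univ_erase_le {f : Fin d → ℝ} {m : ℝ} (hm : 0 ≤ m) (hf : ∀ j ≠ i, f j ≤ m) :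
    ∑ j ∈ Finset.univ.erase i, f j ≤ d * m := by
  have hcard : (Finset.univ.erase i).card ≤ d :=
    (Finset.card_le_univ _).trans_eq (Fintype.card_fin d)
  calc ∑ j ∈ Finset.univ.erase i, f j
      ≤ (Finset.univ.erase i).card • m :=
        Finset.sum_le_card_nsmul _ _ _ fun j hj => hf j (Finset.ne_of_mem_erase hj)
    _ ≤ d * m := by rw [nsmul_eq_mul]; gcongr

theorem abs_neg_half_mul_sum_univ_erase_le {f : Fin d → ℝ} {m : ℝ} (hm : 0 ≤ m)
    (hf : ∀ j ≠ i, |f j| ≤ m) : |-(1 / 2) * ∑ j ∈ Finset.univ.erase i, f j| ≤ d * m / 2 := by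
  rw [abs_mul, abs_neg, abs_of_pos one_half_pos]
  linarith [(Finset.abs_sum_le_sum_abs f (Finset.univ.erase i)).trans (sum_univ_erase_le hm hf)]

theorem abs_calH_le (hAB : ∀ j, A j < B j) (hx : ∀ j ≠ i, x ∉ Icc (A j) (B j)) {M : ℝ}
    (hM : 0 ≤ M) (hu : ∀ j, ∀ t ∈ Icc (A j) (B j), |u j t| ≤ M) :
    |calH d A B u i x| ≤ d * M / 2 :=
  abs_neg_half_mul_sum_univ_erase_le hM fun j hj => abs_harmExt_le (hAB j) (hx j hj) (hu j)

/-- The derivative of `calH d A B u i` off the intervals `[A j, B j]` with `j ≠ i`. -/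
def calHDeriv (d : ℕ) (A B : Fin d → ℝ) (u : Fin d → ℝ → ℝ) (i : Fin d) (x : ℝ) : ℝ :=
  -(1 / 2) * ∑ j ∈ Finset.univ.erase i, harmExtDeriv (A j) (B j) (u j) x

theorem hasDerivAt_calH (hAB : ∀ j, A j ≤ B j) (hu : memVecC d A B u)
    (hx : ∀ j ≠ i, x ∉ Icc (A j) (B j)) :
    HasDerivAt (calH d A B u i) (calHDeriv d A B u i x) x :=
  (HasDerivAt.fun_sum fun j hj =>
    hasDerivAt_harmExt (hAB j) (hu j) (hx j (Finset.ne_of_mem_erase hj))).const_mul _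

theorem continuousOn_calHDeriv (hAB : ∀ j, A j ≤ B j) (hu : memVecC d A B u) {s : Set ℝ}
    (hs : ∀ x ∈ s, ∀ j ≠ i, x ∉ Icc (A j) (B j)) : ContinuousOn (calHDeriv d A B u i) s :=
  continuousOn_const.mul (continuousOn_finsetSum _ fun j hj =>
    (continuousOn_harmExtDeriv (hAB j) (hu j)).mono fun x hx =>
      hs x hx j (Finset.ne_of_mem_erase hj))

theorem abs_calHDeriv_le (hAB : ∀ j, A j < B j) {δ M : ℝ} (hδ : 0 < δ)
    (hx : ∀ j ≠ i, ∀ t ∈ Icc (A j) (B j), δ ≤ |x - t|) (hM : 0 ≤ M)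
    (hu : ∀ j, ∀ t ∈ Icc (A j) (B j), |u j t| ≤ M) : |calHDeriv d A B u i x| ≤ d * M / δ := by
  have hnotMem : ∀ j ≠ i, x ∉ Icc (A j) (B j) := fun j hj hmem => by
    have := hx j hj x hmem
    rw [sub_self, abs_zero] at this
    linarith
  refine (abs_neg_half_mul_sum_univ_erase_le (m := 2 * M / δ) (by positivity) fun j hj =>
    abs_harmExtDeriv_le (hAB j) (hnotMem j hj) hδ (hx j hj) (hu j)).trans_eq ?_
  ring

end CalH

/-- The intervals `[A i, B i]` are nondegenerate, at mutual distance at least `δ > 0` and of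
length at most `L`: the quantitative form of disjointness on which all constants depend. -/
structure IsSeparated {d : ℕ} (δ L : ℝ) (A B : Fin d → ℝ) : Prop where
  pos : 0 < δ
  nonneg : 0 ≤ L
  lt : ∀ i, A i < B i
  gap : ∀ i j, i ≠ j → ∀ x ∈ Icc (A i) (B i), ∀ t ∈ Icc (A j) (B j), δ ≤ |x - t|
  length_le : ∀ i, B i - A i ≤ L

namespace IsSeparated

variable {d : ℕ} {δ L : ℝ} {A B A' B' : Fin d → ℝ}

theorem mono (h : IsSeparated δ L A' B') (hAB : ∀ i, A i < B i)
    (hsub : ∀ i, Icc (A i) (B i) ⊆ Icc (A' i) (B' i)) : IsSeparated δ L A B where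
  pos := h.pos
  nonneg := h.nonneg
  lt := hAB
  gap i j hij x hx t ht := h.gap i j hij x (hsub i hx) t (hsub j ht)
  length_le i := by
    have := (Icc_subset_Icc_iff (hAB i).le).1 (hsub i)
    linarith [h.length_le i]

variable {i j : Fin d} {x : ℝ}

theorem le (h : IsSeparated δ L A B) (i : Fin d) : A i ≤ B i := (h.lt i).le

theorem disjoint (h : IsSeparated δ L A B) (hij : i ≠ j) :
    Disjoint (Icc (A i) (B i)) (Icc (A j) (B j)) :=
  disjoint_left.2 fun x hi hj => by
    have := h.gap i j hij x hi x hj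
    rw [sub_self, abs_zero] at this
    linarith [h.pos]

theorem notMem (h : IsSeparated δ L A B) (hx : x ∈ Icc (A i) (B i)) (hji : j ≠ i) :
    x ∉ Icc (A j) (B j) :=
  (h.disjoint hji.symm).notMem_of_mem_left hx

theorem continuousOn_calH (h : IsSeparated δ L A B) {u : Fin d → ℝ → ℝ} (hu : memVecC d A B u) :
    ContinuousOn (calH d A B u i) (Icc (A i) (B i)) := fun _ hx =>
  (hasDerivAt_calH h.le hu fun _ => h.notMem hx).continuousAt.continuousWithinAt

theorem intervalIntegrable_calHDeriv (h : IsSeparated δ L A B) {u : Fin d → ℝ → ℝ}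
    (hu : memVecC d A B u) :
    IntervalIntegrable (calHDeriv d A B u i) volume (A i) (B i) :=
  (continuousOn_calHDeriv h.le hu fun _ hx _ => h.notMem hx).intervalIntegrable_of_Icc (h.le i)

theorem sq_le_sub_mul_sub (h : IsSeparated δ L A B) (hx : x ∈ Icc (A i) (B i)) (hji : j ≠ i) :
    δ ^ 2 ≤ (x - A j) * (x - B j) := by
  rw [← abs_of_pos (sub_mul_sub_pos_of_notMem_Icc (h.le j) (h.notMem hx hji)), abs_mul, sq]
  exact mul_le_mul (h.gap i j hji.symm x hx _ (left_mem_Icc.2 (h.le j)))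
    (h.gap i j hji.symm x hx _ (right_mem_Icc.2 (h.le j))) h.pos.le (abs_nonneg _)

theorem abs_calHDeriv_le_sum (h : IsSeparated δ L A B) {u u' : Fin d → ℝ → ℝ} {q : ℝ}
    (hu : memVecC d A B u)
    (hderiv : ∀ j, ∀ t ∈ Ioo (A j) (B j), HasDerivAt (u j) (u' j t) t)
    (hu' : ∀ j, IntervalIntegrable (u' j) volume (A j) (B j))
    (hq : ∀ j, ∀ t ∈ Icc (A j) (B j), |u' j t| * ((t - A j) * (B j - t)) ≤ q * (B j - A j))
    (hx : x ∈ Icc (A i) (B i)) :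
    |calHDeriv d A B u i x| ≤
      q / 2 * ∑ j ∈ Finset.univ.erase i, (B j - A j) / ((x - A j) * (x - B j)) := by
  have hterm : ∀ j ∈ Finset.univ.erase i, |harmExtDeriv (A j) (B j) (u j) x| ≤
      q * ((B j - A j) / ((x - A j) * (x - B j))) := fun j hj => by
    rw [← mul_div_assoc]
    exact abs_harmExtDeriv_le_of_weighted (h.lt j) (h.notMem hx (Finset.ne_of_mem_erase hj))
      (hu j) (hderiv j) (hu' j) (hq j)
  rw [calHDeriv, abs_mul, abs_neg, abs_of_pos one_half_pos, div_eq_mul_one_div q, mul_comm q,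
    mul_assoc, Finset.mul_sum]
  gcongr
  exact (Finset.abs_sum_le_sum_abs _ _).trans (Finset.sum_le_sum hterm)

theorem sum_sub_div_mul_le (h : IsSeparated δ L A B) (hx : x ∈ Icc (A i) (B i)) :
    (∑ j ∈ Finset.univ.erase i, (B j - A j) / ((x - A j) * (x - B j))) *
      ((x - A i) * (B i - x)) ≤ B i - A i := by
  rcases hx.1.eq_or_lt with rfl | hAx
  · simpa using h.le i
  rcases hx.2.eq_or_lt with rfl | hxB
  · simpa using h.le i
  rw [← le_div_iff₀ (mul_pos (sub_pos.2 hAx) (sub_pos.2 hxB))]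
  exact sum_div_le_of_pairwiseDisjoint_Icc ⟨hAx, hxB⟩ (fun j _ => h.le j)
    (fun j _ k _ hjk => h.disjoint hjk) fun j hj => h.disjoint (Finset.ne_of_mem_erase hj)

theorem sum_sub_div_le (h : IsSeparated δ L A B) (hx : x ∈ Icc (A i) (B i)) :
    ∑ j ∈ Finset.univ.erase i, (B j - A j) / ((x - A j) * (x - B j)) ≤ d * (L / δ ^ 2) :=
  sum_univ_erase_le (div_nonneg h.nonneg (sq_nonneg δ)) fun j hji =>
    div_le_div₀ h.nonneg (h.length_le j) (pow_pos h.pos 2) (h.sq_le_sub_mul_sub hx hji)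

theorem sub_mul_sub_le (h : IsSeparated δ L A B) (hx : x ∈ Icc (A i) (B i)) :
    (x - A i) * (B i - x) ≤ L * (B i - A i) :=
  mul_le_mul (by linarith [hx.2, h.length_le i]) (by linarith [hx.1]) (by linarith [hx.2])
    h.nonneg

end IsSeparated

/-! ### Inversion of `1 - ℋ` -/

/-- The Banach space `C(Δ⃗)` for `Δ i = [A i, B i]`, with the maximum of the sup norms; unlike
`memVecC`, its elements are not defined off the intervals. -/
def VecC {d : ℕ} (A B : Fin d → ℝ) : Type :=
  (i : Fin d) → C(Icc (A i) (B i), ℝ)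

namespace VecC

variable {d : ℕ} {A B : Fin d → ℝ}

instance : NormedAddCommGroup (VecC A B) :=
  inferInstanceAs (NormedAddCommGroup ((i : Fin d) → C(Icc (A i) (B i), ℝ)))

instance : NormedSpace ℝ (VecC A B) :=
  inferInstanceAs (NormedSpace ℝ ((i : Fin d) → C(Icc (A i) (B i), ℝ)))

instance : CompleteSpace (VecC A B) :=
  inferInstanceAs (CompleteSpace ((i : Fin d) → C(Icc (A i) (B i), ℝ)))

@[ext]
theorem ext {u v : VecC A B} (h : ∀ i x, u i x = v i x) : u = v :=
  funext fun i => ContinuousMap.ext (h i)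

theorem zero_apply (i : Fin d) (x : Icc (A i) (B i)) : (0 : VecC A B) i x = 0 :=
  rfl

theorem add_apply (u v : VecC A B) (i : Fin d) (x : Icc (A i) (B i)) :
    (u + v) i x = u i x + v i x :=
  rfl

theorem smul_apply (c : ℝ) (u : VecC A B) (i : Fin d) (x : Icc (A i) (B i)) :
    (c • u) i x = c * u i x :=
  rfl

theorem norm_le_iff {u : VecC A B} {M : ℝ} (hM : 0 ≤ M) : ‖u‖ ≤ M ↔ ∀ i x, |u i x| ≤ M :=
  (pi_norm_le_iff_of_nonneg hM).trans <| forall_congr' fun i => ContinuousMap.norm_le (u i) hM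

end VecC

/-- An element of `C(Δ⃗)` as a vector of functions on `ℝ` vanishing off the intervals. -/
def extendByZero {d : ℕ} {A B : Fin d → ℝ} (u : VecC A B) (i : Fin d) : ℝ → ℝ :=
  Function.extend Subtype.val (u i) 0

section ExtendByZero

variable {d : ℕ} {A B : Fin d → ℝ} (u v : VecC A B) {i : Fin d}

theorem extendByZero_coe (x : Icc (A i) (B i)) : extendByZero u i x = u i x :=
  Subtype.val_injective.extend_apply _ _ x

theorem memVecC_extendByZero : memVecC d A B (extendByZero u) := fun i =>
  continuousOn_iff_continuous_domRestrict.2 <|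
    (map_continuous (u i)).congr fun x => (extendByZero_coe u x).symm

theorem abs_extendByZero_le_norm {x : ℝ} (hx : x ∈ Icc (A i) (B i)) :
    |extendByZero u i x| ≤ ‖u‖ := by
  rw [extendByZero_coe u ⟨x, hx⟩]
  exact (VecC.norm_le_iff (norm_nonneg u)).1 le_rfl i _

end ExtendByZero

namespace IsSeparated

variable {d : ℕ} {δ L : ℝ} {A B : Fin d → ℝ} (h : IsSeparated δ L A B) {i : Fin d} {x : ℝ}

/-- The operator `ℋ_Δ⃗` on `C(Δ⃗)`. -/
def calHCLM : VecC A B →L[ℝ] VecC A B :=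
  LinearMap.mkContinuous
    { toFun := fun u i => ⟨(Icc (A i) (B i)).domRestrict (calH d A B (extendByZero u) i),
        (h.continuousOn_calH (memVecC_extendByZero u)).domRestrict⟩
      map_add' := fun u v => by
        ext i x
        refine (calH_congr h.le (fun _ => h.notMem x.2) fun j t ht => ?_).trans
          (calH_add h.le (fun _ => h.notMem x.2) (memVecC_extendByZero u) (memVecC_extendByZero v))
        lift t to Icc (A j) (B j) using ht
        simp only [extendByZero_coe, VecC.add_apply]
      map_smul' := fun c u => by
        ext i x
        refine (calH_congr h.le (fun _ => h.notMem x.2) fun j t ht => ?_).trans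
          (calH_const_mul h.le (fun _ => h.notMem x.2) c _)
        lift t to Icc (A j) (B j) using ht
        simp only [extendByZero_coe, VecC.smul_apply] }
    (d / 2) fun u => by
      refine (VecC.norm_le_iff (by positivity)).2 fun i x => ?_
      rw [div_mul_eq_mul_div]
      exact abs_calH_le h.lt (fun _ => h.notMem x.2) (norm_nonneg u) fun j t ht =>
        abs_extendByZero_le_norm u ht

theorem calHCLM_apply (u : VecC A B) (x : Icc (A i) (B i)) :
    h.calHCLM u i x = calH d A B (extendByZero u) i x :=
  rfl

theorem norm_calHCLM_le : ‖h.calHCLM‖ ≤ d / 2 :=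
  LinearMap.mkContinuous_norm_le _ (by positivity) _

theorem hasDerivAt_extendByZero_calHCLM (u : VecC A B) (hx : x ∈ Ioo (A i) (B i)) :
    HasDerivAt (extendByZero (h.calHCLM u) i) (calHDeriv d A B (extendByZero u) i x) x := by
  refine (hasDerivAt_calH h.le (memVecC_extendByZero u) fun _ =>
    h.notMem (Ioo_subset_Icc_self hx)).congr_of_eventuallyEq ?_
  filter_upwards [Icc_mem_nhds hx.1 hx.2] with y hy
  rw [extendByZero_coe _ ⟨y, hy⟩, calHCLM_apply]

theorem abs_calHDeriv_calHCLM_le_sum (u : VecC A B) {q : ℝ}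
    (hq : ∀ j, ∀ t ∈ Icc (A j) (B j), |calHDeriv d A B (extendByZero u) j t| *
      ((t - A j) * (B j - t)) ≤ q * (B j - A j)) (hx : x ∈ Icc (A i) (B i)) :
    |calHDeriv d A B (extendByZero (h.calHCLM u)) i x| ≤
      q / 2 * ∑ j ∈ Finset.univ.erase i, (B j - A j) / ((x - A j) * (x - B j)) :=
  h.abs_calHDeriv_le_sum (memVecC_extendByZero _)
    (fun _ _ => h.hasDerivAt_extendByZero_calHCLM u)
    (fun _ => h.intervalIntegrable_calHDeriv (memVecC_extendByZero u)) hq hx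

/-- The weight `(x - A i) (B i - x)` is what makes one application of `ℋ` halve the derivative. -/
theorem abs_calHDeriv_pow_mul_le (u : VecC A B) (n : ℕ) (hx : x ∈ Icc (A i) (B i)) :
    |calHDeriv d A B (extendByZero ((h.calHCLM ^ n) u)) i x| * ((x - A i) * (B i - x)) ≤
      d * ‖u‖ / δ * L * (1 / 2) ^ n * (B i - A i) := by
  have hδ := h.pos
  have hL := h.nonneg
  induction n generalizing i x with
  | zero =>
    have hbound := abs_calHDeriv_le (i := i) h.lt h.pos (fun j hji => h.gap i j hji.symm x hx)
      (norm_nonneg u) fun j t => abs_extendByZero_le_norm u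
    rw [pow_zero, pow_zero, mul_one, mul_assoc _ L]
    exact mul_le_mul hbound (h.sub_mul_sub_le hx)
      (mul_nonneg (sub_nonneg.2 hx.1) (sub_nonneg.2 hx.2)) (by positivity)
  | succ n ih =>
    set q := d * ‖u‖ / δ * L * (1 / 2) ^ n with hq
    have hstep := h.abs_calHDeriv_calHCLM_le_sum _ (fun j t => ih) hx
    rw [pow_succ' h.calHCLM, mul_apply_eq_comp]
    calc _ ≤ q / 2 * _ * ((x - A i) * (B i - x)) :=
          mul_le_mul_of_nonneg_right hstep
            (mul_nonneg (sub_nonneg.2 hx.1) (sub_nonneg.2 hx.2))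
      _ ≤ q / 2 * (B i - A i) := by
          rw [mul_assoc]
          gcongr
          exact h.sum_sub_div_mul_le hx
      _ = _ := by rw [hq, pow_succ]; ring

theorem abs_calHDeriv_pow_succ_le (u : VecC A B) (n : ℕ) (hx : x ∈ Icc (A i) (B i)) :
    |calHDeriv d A B (extendByZero ((h.calHCLM ^ (n + 1)) u)) i x| ≤
      d ^ 2 * L ^ 2 / (2 * δ ^ 3) * ‖u‖ * (1 / 2) ^ n := by
  have hδ := h.pos
  have hL := h.nonneg
  rw [pow_succ' h.calHCLM, mul_apply_eq_comp]
  calc _ ≤ d * ‖u‖ / δ * L * (1 / 2) ^ n / 2 * _ :=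
        h.abs_calHDeriv_calHCLM_le_sum _ (fun j t => h.abs_calHDeriv_pow_mul_le u n) hx
    _ ≤ d * ‖u‖ / δ * L * (1 / 2) ^ n / 2 * (d * (L / δ ^ 2)) := by
        gcongr
        exact h.sum_sub_div_le hx
    _ = _ := by field_simp

theorem abs_pow_add_two_sub_le (u : VecC A B) (n : ℕ) (x y : Icc (A i) (B i)) :
    |(h.calHCLM ^ (n + 2)) u i x - (h.calHCLM ^ (n + 2)) u i y| ≤
      d ^ 2 * L ^ 3 / (2 * δ ^ 3) * ‖u‖ * (1 / 2) ^ n := by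
  have hδ := h.pos
  rw [pow_succ' h.calHCLM (n + 1), mul_apply_eq_comp, calHCLM_apply, calHCLM_apply]
  calc _ ≤ d ^ 2 * L ^ 2 / (2 * δ ^ 3) * ‖u‖ * (1 / 2) ^ n * |(x : ℝ) - y| :=
        (convex_Icc _ _).norm_image_sub_le_of_norm_hasDerivWithin_le
          (fun t ht => (hasDerivAt_calH h.le (memVecC_extendByZero _) fun _ =>
            h.notMem ht).hasDerivWithinAt)
          (fun t ht => h.abs_calHDeriv_pow_succ_le u n ht) y.2 x.2
    _ ≤ d ^ 2 * L ^ 2 / (2 * δ ^ 3) * ‖u‖ * (1 / 2) ^ n * L := by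
        gcongr
        exact (Real.dist_le_of_mem_Icc x.2 y.2).trans (h.length_le i)
    _ = _ := by ring

end IsSeparated

/-- The element of `C(Δ⃗)` that is constant, equal to `c i`, on `Δ i`. -/
def constVec {d : ℕ} {A B : Fin d → ℝ} (c : Fin d → ℝ) : VecC A B :=
  fun i => ContinuousMap.const _ (c i)

/-- The restriction of a vector of functions on `ℝ` to an element of `C(Δ⃗)`. -/
def restrictVec {d : ℕ} {A B : Fin d → ℝ} {u : Fin d → ℝ → ℝ} (hu : memVecC d A B u) :
    VecC A B :=
  fun i => ⟨(Icc (A i) (B i)).domRestrict (u i), (hu i).domRestrict⟩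

/-- A polynomial annihilating `ℋ` on constant vectors, where `ℋ` is `1 / 2` times the identity minus
the all-ones matrix and so has the eigenvalues `1 / 2` and `(1 - d) / 2`. -/
def constAnnihilator (d : ℕ) : ℝ[X] :=
  (2 * X + C (-1)) * (2 * X + C (d - 1 : ℝ))

namespace IsSeparated

variable {d : ℕ} {δ L : ℝ} {A B : Fin d → ℝ} (h : IsSeparated δ L A B)

theorem calHCLM_constVec (c : Fin d → ℝ) :
    h.calHCLM (constVec c) = constVec fun i => (c i - ∑ j, c j) / 2 := by
  ext i x
  refine (calH_congr h.le (fun _ => h.notMem x.2) fun j t ht => ?_).trans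
    (calH_const h.lt (fun _ => h.notMem x.2) c)
  exact extendByZero_coe (constVec c) ⟨t, ht⟩

theorem aeval_two_mul_X_add_C_constVec (b : ℝ) (c : Fin d → ℝ) :
    aeval h.calHCLM (2 * X + C b) (constVec c) =
      constVec fun i => (1 + b) * c i - ∑ j, c j := by
  have haeval : aeval h.calHCLM (2 * X + C b) = (2 : ℝ) • h.calHCLM + b • 1 := by
    rw [← map_ofNat C 2, map_add, map_mul, aeval_X, aeval_C, aeval_C, ← Algebra.smul_def,
      Algebra.algebraMap_eq_smul_one]
  rw [haeval, add_apply, smul_apply, smul_apply, one_apply_eq_self, calHCLM_constVec]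
  ext i x
  simp only [constVec, VecC.add_apply, VecC.smul_apply, ContinuousMap.const_apply]
  ring

theorem aeval_constAnnihilator_constVec (c : Fin d → ℝ) :
    aeval h.calHCLM (constAnnihilator d) (constVec c) = 0 := by
  rw [constAnnihilator, map_mul, mul_apply_eq_comp,
    aeval_two_mul_X_add_C_constVec, aeval_two_mul_X_add_C_constVec]
  ext i x
  simp only [constVec, ContinuousMap.const_apply, Finset.sum_sub_distrib, ← Finset.mul_sum,
    Finset.sum_const, Finset.card_univ, Fintype.card_fin, nsmul_eq_mul, VecC.zero_apply]
  ring

theorem norm_aeval_constAnnihilator_le : ‖aeval h.calHCLM (constAnnihilator d)‖ ≤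
    absCoeffEval (constAnnihilator d) (d / 2) :=
  norm_aeval_le_absCoeffEval ContinuousLinearMap.norm_id_le h.norm_calHCLM_le _

theorem norm_pow_mul_aeval_le (n : ℕ) :
    ‖h.calHCLM ^ n * aeval h.calHCLM (X ^ 2 * constAnnihilator d)‖ ≤
      absCoeffEval (constAnnihilator d) (d / 2) * (d ^ 2 * L ^ 3 / (2 * δ ^ 3)) * (1 / 2) ^ n := by
  have hδ := h.pos
  have hL := h.nonneg
  have hQ := h.norm_aeval_constAnnihilator_le
  set k := h.calHCLM
  set Q := aeval k (constAnnihilator d)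
  rw [pow_mul_aeval_X_sq_mul]
  refine ContinuousLinearMap.opNorm_le_bound _
    (mul_nonneg (mul_nonneg ((norm_nonneg Q).trans hQ) (by positivity)) (by positivity)) fun u => ?_
  -- `k ^ (n + 2) u` is close to the constant vector of its values at the left endpoints.
  set c : VecC A B := constVec fun i => (k ^ (n + 2)) u i ⟨A i, left_mem_Icc.2 (h.le i)⟩
  have hclose : ‖(k ^ (n + 2)) u - c‖ ≤ d ^ 2 * L ^ 3 / (2 * δ ^ 3) * ‖u‖ * (1 / 2) ^ n :=
    (VecC.norm_le_iff (by positivity)).2 fun i x => h.abs_pow_add_two_sub_le u n x _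
  calc ‖(Q * k ^ (n + 2)) u‖
      = ‖Q ((k ^ (n + 2)) u - c)‖ := by
        rw [mul_apply_eq_comp, map_sub, h.aeval_constAnnihilator_constVec, sub_zero]
    _ ≤ absCoeffEval (constAnnihilator d) (d / 2) *
          (d ^ 2 * L ^ 3 / (2 * δ ^ 3) * ‖u‖ * (1 / 2) ^ n) := Q.le_of_opNorm_le_of_le hQ hclose
    _ = _ := by ring

end IsSeparated

theorem exists_norm_inverse_one_sub_calHCLM_le (d : ℕ) (δ L : ℝ) :
    ∃ κ, 0 ≤ κ ∧ ∀ {A B : Fin d → ℝ} (h : IsSeparated δ L A B), ∃ y : VecC A B →L[ℝ] VecC A B,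
      y * (1 - h.calHCLM) = 1 ∧ (1 - h.calHCLM) * y = 1 ∧ ‖y‖ ≤ κ := by
  have heval : eval 1 (X ^ 2 * constAnnihilator d) = (d + 1 : ℝ) := by
    simp only [constAnnihilator, eval_mul, eval_add, eval_pow, eval_X, eval_C, eval_ofNat]
    ring
  have hinv := fun A B (h : IsSeparated δ L A B) => exists_inverse_one_sub_of_norm_aeval_le
    ContinuousLinearMap.norm_id_le h.norm_calHCLM_le (heval ▸ Nat.cast_add_one_ne_zero d)
    h.norm_pow_mul_aeval_le one_half_pos.le one_half_lt_one
  exact ⟨_, abs_nonneg _, fun h => (hinv _ _ h).imp fun _ hy =>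
    ⟨hy.1, hy.2.1, hy.2.2.trans (le_abs_self _)⟩⟩

/-- The equation `(I - ℋ) u = a` on `Δ⃗'`, where `Δ i = [A i, B i]` and `Δ' i = [A' i, B' i]`. -/
def IsSolution (d : ℕ) (A B A' B' : Fin d → ℝ) (u a : Fin d → ℝ → ℝ) : Prop :=
  ∀ i, ∀ x ∈ Icc (A' i) (B' i), u i x = calH d A B u i x + a i x

namespace IsSeparated

variable {d : ℕ} {δ L : ℝ} {A B : Fin d → ℝ} (h : IsSeparated δ L A B) {a u : Fin d → ℝ → ℝ}

theorem isSolution_extendByZero {w : VecC A B} (ha : memVecC d A B a)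
    (hw : (1 - h.calHCLM) w = restrictVec ha) : IsSolution d A B A B (extendByZero w) a := by
  intro i x hx
  rw [extendByZero_coe w ⟨x, hx⟩, ← sub_eq_iff_eq_add']
  exact congrArg (fun v : VecC A B => v i ⟨x, hx⟩) hw

theorem one_sub_calHCLM_restrictVec (hu : memVecC d A B u) (ha : memVecC d A B a)
    (hua : IsSolution d A B A B u a) : (1 - h.calHCLM) (restrictVec hu) = restrictVec ha := by
  ext i x
  have hcongr : h.calHCLM (restrictVec hu) i x = calH d A B u i x :=
    calH_congr h.le (fun _ => h.notMem x.2) fun j t ht => extendByZero_coe _ ⟨t, ht⟩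
  change u i x - h.calHCLM (restrictVec hu) i x = a i x
  rw [hcongr, hua i x x.2, add_sub_cancel_left]

end IsSeparated

theorem exists_isSolution_and_abs_le (d : ℕ) (δ L : ℝ) :
    ∃ κ, 0 ≤ κ ∧ ∀ {A B : Fin d → ℝ}, IsSeparated δ L A B → ∀ {a}, memVecC d A B a →
      (∃ u, memVecC d A B u ∧ IsSolution d A B A B u a) ∧
      ∀ {u N}, 0 ≤ N → memVecC d A B u → IsSolution d A B A B u a →
        (∀ i, ∀ x ∈ Icc (A i) (B i), |a i x| ≤ N) →
        ∀ i, ∀ x ∈ Icc (A i) (B i), |u i x| ≤ κ * N := by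
  obtain ⟨κ, hκ, hinv⟩ := exists_norm_inverse_one_sub_calHCLM_le d δ L
  refine ⟨κ, hκ, fun h a ha => ?_⟩
  obtain ⟨y, hl, hr, hy⟩ := hinv h
  refine ⟨⟨_, memVecC_extendByZero _, h.isSolution_extendByZero ha
    (DFunLike.congr_fun hr (restrictVec ha))⟩, fun {u N} hN hu hua haN i x hx => ?_⟩
  have hyu : y (restrictVec ha) = restrictVec hu := by
    rw [← h.one_sub_calHCLM_restrictVec hu ha hua]
    exact DFunLike.congr_fun hl (restrictVec hu)
  have hnorm : ‖restrictVec ha‖ ≤ N :=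
    (VecC.norm_le_iff hN).2 fun i x => haN i x x.2
  calc |u i x| = |restrictVec hu i ⟨x, hx⟩| := rfl
    _ ≤ ‖restrictVec hu‖ := (VecC.norm_le_iff (norm_nonneg _)).1 le_rfl i _
    _ ≤ κ * N := hyu ▸ y.le_of_opNorm_le_of_le hy hnorm

/-! ### Solutions on larger intervals -/

section Norms

variable {a b x : ℝ} {f : ℝ → ℝ}

theorem abs_le_supIcc (hf : ContinuousOn f (Icc a b)) (hx : x ∈ Icc a b) :
    |f x| ≤ supIcc a b f :=
  le_csSup (isCompact_Icc.image_of_continuousOn hf.abs).bddAbove (mem_image_of_mem _ hx)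

theorem supIcc_nonneg : 0 ≤ supIcc a b f :=
  Real.sSup_nonneg (forall_mem_image.2 fun _ _ => abs_nonneg _)

theorem supIcc_le {M : ℝ} (hM : 0 ≤ M) (hf : ∀ x ∈ Icc a b, |f x| ≤ M) : supIcc a b f ≤ M :=
  Real.sSup_le (forall_mem_image.2 hf) hM

variable {d : ℕ} {A B : Fin d → ℝ} {u : Fin d → ℝ → ℝ}

theorem vecCNorm_nonneg : 0 ≤ vecCNorm d A B u :=
  Finset.sum_nonneg fun _ _ => supIcc_nonneg

theorem vecCNorm_le_vecC1Norm : vecCNorm d A B u ≤ vecC1Norm d A B u :=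
  Finset.sum_le_sum fun _ _ => le_add_of_nonneg_right supIcc_nonneg

theorem abs_le_vecCNorm (hu : memVecC d A B u) {i : Fin d} (hx : x ∈ Icc (A i) (B i)) :
    |u i x| ≤ vecCNorm d A B u :=
  (abs_le_supIcc (hu i) hx).trans (Finset.single_le_sum
    (f := fun j => supIcc (A j) (B j) (u j)) (fun _ _ => supIcc_nonneg) (Finset.mem_univ i))

theorem sum_le_sum_add_card_mul {f g : Fin d → ℝ} {c : ℝ} (hfg : ∀ i, f i ≤ g i + c) :
    ∑ i, f i ≤ ∑ i, g i + d * c :=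
  (Finset.sum_le_sum fun i _ => hfg i).trans_eq <| by
    rw [Finset.sum_add_distrib, Finset.sum_const, Finset.card_univ, Fintype.card_fin, nsmul_eq_mul]

end Norms

namespace IsSeparated

variable {d : ℕ} {δ L M x : ℝ} {A B A' B' : Fin d → ℝ} {i j : Fin d} {a u : Fin d → ℝ → ℝ}

theorem notMem_of_subset (h : IsSeparated δ L A' B')
    (hsub : ∀ i, Icc (A i) (B i) ⊆ Icc (A' i) (B' i))
    (hx : x ∈ Icc (A' i) (B' i)) (hji : j ≠ i) : x ∉ Icc (A j) (B j) :=
  fun hmem => h.notMem hx hji (hsub j hmem)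

theorem contDiffOn_calH (h : IsSeparated δ L A' B') (hAB : ∀ i, A i < B i)
    (hsub : ∀ i, Icc (A i) (B i) ⊆ Icc (A' i) (B' i))
    (hu : memVecC d A B u) :
    ContDiffOn ℝ 1 (calH d A B u i) (Icc (A' i) (B' i)) :=
  contDiffOn_one_of_hasDerivAt (uniqueDiffOn_Icc (h.lt i))
    (fun _ hx => hasDerivAt_calH (fun j => (hAB j).le) hu fun _ => h.notMem_of_subset hsub hx)
    (continuousOn_calHDeriv (fun j => (hAB j).le) hu fun _ hx _ => h.notMem_of_subset hsub hx)

theorem isSolution_calH_add (h : IsSeparated δ L A' B') (hAB : ∀ i, A i < B i)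
    (hsub : ∀ i, Icc (A i) (B i) ⊆ Icc (A' i) (B' i))
    (hua : IsSolution d A B A B u a) :
    IsSolution d A B A' B' (fun i x => calH d A B u i x + a i x) a := fun i x hx =>
  congrArg (· + a i x) (calH_congr (fun j => (hAB j).le) (fun _ => h.notMem_of_subset hsub hx) hua)

theorem supIcc_le_of_isSolution (h : IsSeparated δ L A' B') (hAB : ∀ i, A i < B i)
    (hsub : ∀ i, Icc (A i) (B i) ⊆ Icc (A' i) (B' i))
    (ha : memVecC d A' B' a) (hua : IsSolution d A B A' B' u a)
    (hM : 0 ≤ M) (hu : ∀ j, ∀ t ∈ Icc (A j) (B j), |u j t| ≤ M) :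
    supIcc (A' i) (B' i) (u i) ≤ supIcc (A' i) (B' i) (a i) + d * M / 2 := by
  refine supIcc_le (add_nonneg supIcc_nonneg (by positivity)) fun x hx => ?_
  rw [hua i x hx, add_comm]
  exact (abs_add_le _ _).trans (add_le_add (abs_le_supIcc (ha i) hx)
    (abs_calH_le hAB (fun _ => h.notMem_of_subset hsub hx) hM hu))

theorem supIcc_derivWithin_le_of_isSolution (h : IsSeparated δ L A' B') (hAB : ∀ i, A i < B i)
    (hsub : ∀ i, Icc (A i) (B i) ⊆ Icc (A' i) (B' i))
    (ha : memVecC1 d A' B' a) (hu : memVecC d A B u)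
    (hua : IsSolution d A B A' B' u a) (hM : 0 ≤ M)
    (huM : ∀ j, ∀ t ∈ Icc (A j) (B j), |u j t| ≤ M) :
    supIcc (A' i) (B' i) (derivWithin (u i) (Icc (A' i) (B' i))) ≤
      supIcc (A' i) (B' i) (derivWithin (a i) (Icc (A' i) (B' i))) + d * M / δ := by
  have hδ := h.pos
  have hunique := uniqueDiffOn_Icc (h.lt i)
  refine supIcc_le (add_nonneg supIcc_nonneg (by positivity)) fun x hx => ?_
  have hderiv : HasDerivWithinAt (u i)
      (calHDeriv d A B u i x + derivWithin (a i) (Icc (A' i) (B' i)) x) (Icc (A' i) (B' i)) x :=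
    ((hasDerivAt_calH (fun j => (hAB j).le) hu
      fun _ => h.notMem_of_subset hsub hx).hasDerivWithinAt.add
      ((ha i).differentiableOn one_ne_zero x hx).hasDerivWithinAt).congr (hua i) (hua i x hx)
  rw [hderiv.derivWithin (hunique x hx), add_comm]
  exact (abs_add_le _ _).trans (add_le_add
    (abs_le_supIcc ((ha i).continuousOn_derivWithin hunique le_rfl) hx)
    (abs_calHDeriv_le hAB hδ
      (fun j hji t ht => h.gap i j hji.symm x hx t (hsub j ht)) hM huM))

theorem vecCNorm_le_of_isSolution (h : IsSeparated δ L A' B') (hAB : ∀ i, A i < B i)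
    (hsub : ∀ i, Icc (A i) (B i) ⊆ Icc (A' i) (B' i))
    (ha : memVecC d A' B' a) (hua : IsSolution d A B A' B' u a)
    (hM : 0 ≤ M) (hu : ∀ j, ∀ t ∈ Icc (A j) (B j), |u j t| ≤ M) :
    vecCNorm d A' B' u ≤ vecCNorm d A' B' a + d * (d * M / 2) :=
  sum_le_sum_add_card_mul fun _ => h.supIcc_le_of_isSolution hAB hsub ha hua hM hu

theorem vecC1Norm_le_of_isSolution (h : IsSeparated δ L A' B') (hAB : ∀ i, A i < B i)
    (hsub : ∀ i, Icc (A i) (B i) ⊆ Icc (A' i) (B' i))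
    (ha : memVecC1 d A' B' a) (hu : memVecC d A B u)
    (hua : IsSolution d A B A' B' u a) (hM : 0 ≤ M)
    (huM : ∀ j, ∀ t ∈ Icc (A j) (B j), |u j t| ≤ M) :
    vecC1Norm d A' B' u ≤ vecC1Norm d A' B' a + d * (d * M / 2 + d * M / δ) :=
  sum_le_sum_add_card_mul fun i => by
    have hsup := h.supIcc_le_of_isSolution hAB hsub (i := i) (fun j => (ha j).continuousOn) hua
      hM huM
    have hderiv := h.supIcc_derivWithin_le_of_isSolution hAB hsub (i := i) ha hu hua hM huM
    linarith

end IsSeparated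

theorem inverse_uniformly_bounded_general (d : ℕ) (δ L : ℝ) :
    ∃ C : ℝ, ∀ A B A' B' : Fin d → ℝ, IsSeparated δ L A' B' → (∀ i, A i < B i) →
      (∀ i, Icc (A i) (B i) ⊆ Icc (A' i) (B' i)) →
      InvBoundedBy d A B A' B' (memVecC d A' B') (vecCNorm d A' B') C ∧
      InvBoundedBy d A B A' B' (memVecC1 d A' B') (vecC1Norm d A' B') C := by
  obtain ⟨κ, hκ, hsolve⟩ := exists_isSolution_and_abs_le d δ L
  refine ⟨1 + d * (d * κ / 2 + d * κ / δ), fun A B A' B' h hAB hsub => ?_⟩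
  have hδ := h.pos
  have hexists : ∀ a, memVecC d A' B' a → ∃ w, memVecC d A B w ∧ IsSolution d A B A B w a :=
    fun a ha => (hsolve (h.mono hAB hsub) fun i => (ha i).mono (hsub i)).1
  have habs : ∀ u a, memVecC d A' B' u → memVecC d A' B' a → IsSolution d A B A' B' u a →
      ∀ i, ∀ x ∈ Icc (A i) (B i), |u i x| ≤ κ * vecCNorm d A' B' a := fun u a hu ha hua =>
    (hsolve (h.mono hAB hsub) fun i => (ha i).mono (hsub i)).2 vecCNorm_nonneg
      (fun i => (hu i).mono (hsub i)) (fun i x hx => hua i x (hsub i hx))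
      fun i x hx => abs_le_vecCNorm ha (hsub i hx)
  refine ⟨⟨fun a ha => ?_, fun u a hu ha hua => ?_⟩, fun a ha => ?_, fun u a hu ha hua => ?_⟩
  · obtain ⟨w, hw, hwa⟩ := hexists a ha
    exact ⟨_, fun i => (h.contDiffOn_calH hAB hsub hw).continuousOn.add (ha i),
      h.isSolution_calH_add hAB hsub hwa⟩
  · have hN : 0 ≤ vecCNorm d A' B' a := vecCNorm_nonneg
    have hδN : 0 ≤ d * (d * κ / δ) * vecCNorm d A' B' a := by positivity
    linarith [h.vecCNorm_le_of_isSolution hAB hsub ha hua (mul_nonneg hκ hN) (habs u a hu ha hua)]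
  · obtain ⟨w, hw, hwa⟩ := hexists a fun i => (ha i).continuousOn
    exact ⟨_, fun i => (h.contDiffOn_calH hAB hsub hw).add (ha i),
      h.isSolution_calH_add hAB hsub hwa⟩
  · have hN : 0 ≤ vecCNorm d A' B' a := vecCNorm_nonneg
    have hmono : d * (d * κ / 2 + d * κ / δ) * vecCNorm d A' B' a ≤
        d * (d * κ / 2 + d * κ / δ) * vecC1Norm d A' B' a := by
      gcongr
      exact vecCNorm_le_vecC1Norm
    have hbound := h.vecC1Norm_le_of_isSolution hAB hsub ha
      (fun i => (hu i).continuousOn.mono (hsub i)) hua (mul_nonneg hκ hN)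
      (habs u a (fun i => (hu i).continuousOn) (fun i => (ha i).continuousOn) hua)
    linarith [show d * (d * (κ * vecCNorm d A' B' a) / 2 + d * (κ * vecCNorm d A' B' a) / δ) =
      d * (d * κ / 2 + d * κ / δ) * vecCNorm d A' B' a by ring]

theorem exists_pos_forall_le_of_tendsto {f : ℕ → ℝ} {l : ℝ} (hf : ∀ n, 0 < f n) (hl : 0 < l)
    (hlim : Tendsto f atTop (𝓝 l)) : ∃ δ > 0, ∀ n, δ ≤ f n := by
  obtain ⟨M, hM⟩ := (hlim.inv₀ hl.ne').bddAbove_range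
  have hM' : ∀ n, (f n)⁻¹ ≤ M := fun n => hM (mem_range_self n)
  exact ⟨M⁻¹, inv_pos.2 ((inv_pos.2 (hf 0)).trans_le (hM' 0)), fun n =>
    inv_le_of_inv_le₀ (hf n) (hM' n)⟩

theorem zero_lt_max_sub_of_disjoint_Icc {a b a' b' : ℝ} (hab : a < b) (hab' : a' < b')
    (hdisj : Disjoint (Icc a b) (Icc a' b')) : 0 < max (a - b') (a' - b) := by
  by_contra! hle
  rw [max_le_iff, sub_nonpos, sub_nonpos] at hle
  exact disjoint_left.1 hdisj ⟨le_max_left a a', max_le hab.le hle.2⟩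
    ⟨le_max_right a a', max_le hle.1 hab'.le⟩

theorem le_abs_sub_of_le_max {δ a b a' b' x t : ℝ} (hδ : δ ≤ max (a - b') (a' - b))
    (hx : x ∈ Icc a b) (ht : t ∈ Icc a' b') : δ ≤ |x - t| := by
  rcases le_max_iff.1 hδ with hδ | hδ
  · exact le_trans (by linarith [hx.1, ht.2]) (le_abs_self _)
  · exact le_trans (by linarith [hx.2, ht.1]) (neg_le_abs _)

theorem exists_isSeparated_of_tendsto {d : ℕ} {A B : Fin d → ℝ} {An Bn : ℕ → Fin d → ℝ}
    (hAB : ∀ i, A i < B i)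
    (hdisj : ∀ i j, i ≠ j → Disjoint (Icc (A i) (B i)) (Icc (A j) (B j)))
    (hABn : ∀ n i, An n i < Bn n i)
    (hdisjn : ∀ n i j, i ≠ j → Disjoint (Icc (An n i) (Bn n i)) (Icc (An n j) (Bn n j)))
    (hconvA : ∀ i, Tendsto (fun n => An n i) atTop (𝓝 (A i)))
    (hconvB : ∀ i, Tendsto (fun n => Bn n i) atTop (𝓝 (B i))) :
    ∃ δ L, ∀ n, IsSeparated δ L (An n) (Bn n) := by
  have hgap : ∀ i j, ∀ᶠ δ in 𝓝[>] (0 : ℝ), i ≠ j →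
      ∀ n, δ ≤ max (An n i - Bn n j) (An n j - Bn n i) := fun i j => by
    rw [eventually_imp_distrib_left]
    intro hij
    obtain ⟨δ, hδ, hle⟩ := exists_pos_forall_le_of_tendsto
      (fun n => zero_lt_max_sub_of_disjoint_Icc (hABn n i) (hABn n j) (hdisjn n i j hij))
      (zero_lt_max_sub_of_disjoint_Icc (hAB i) (hAB j) (hdisj i j hij))
      (((hconvA i).sub (hconvB j)).max ((hconvA j).sub (hconvB i)))
    filter_upwards [Ioc_mem_nhdsGT hδ] with ε hε n using hε.2.trans (hle n)
  have hlength : ∀ i, ∀ᶠ L in atTop, ∀ n, Bn n i - An n i ≤ L := fun i => by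
    obtain ⟨M, hM⟩ := ((hconvB i).sub (hconvA i)).bddAbove_range
    filter_upwards [eventually_ge_atTop M] with L hL n using (hM (mem_range_self n)).trans hL
  obtain ⟨δ, hδ, hδgap⟩ := (eventually_mem_nhdsWithin.and
    (eventually_all.2 fun i => eventually_all.2 fun j => hgap i j)).exists
  obtain ⟨L, hL, hLlength⟩ := ((eventually_ge_atTop 0).and (eventually_all.2 hlength)).exists
  exact ⟨δ, L, fun n => ⟨hδ, hL, hABn n, fun i j hij x hx t ht =>
    le_abs_sub_of_le_max (hδgap i j hij n) hx ht, fun i => hLlength i n⟩⟩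

/-- Lemma 3.9: the operators `(I − ℋ_{Δ⃗_n})⁻¹` are uniformly bounded on
`C(Δ⃗_n)` and `C¹(Δ⃗_n)`, and the operators `(I − ℋ_{Δ⃗_n,Δ⃗′})⁻¹` are uniformly bounded on
`C(Δ⃗′)` and `C¹(Δ⃗′)`. -/
theorem inverse_uniformly_bounded
    (d : ℕ) (A B : Fin d → ℝ) (hAB : ∀ i, A i < B i)
    (hdisj : ∀ i j, i ≠ j → Disjoint (Set.Icc (A i) (B i)) (Set.Icc (A j) (B j)))
    -- intervals `Δ⃗_n`, pairwise disjoint, converging to `Δ⃗`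
    (An Bn : ℕ → Fin d → ℝ)
    (hABn : ∀ n i, An n i < Bn n i)
    (hdisjn : ∀ n, ∀ i j, i ≠ j →
      Disjoint (Set.Icc (An n i) (Bn n i)) (Set.Icc (An n j) (Bn n j)))
    (hconvA : ∀ i, Tendsto (fun n => An n i) atTop (𝓝 (A i)))
    (hconvB : ∀ i, Tendsto (fun n => Bn n i) atTop (𝓝 (B i))) :
    -- uniform bound for `(I − ℋ_{Δ⃗_n})⁻¹` on `C(Δ⃗_n)` and on `C¹(Δ⃗_n)`
    (∃ C : ℝ, ∀ n,
      InvBoundedBy d (An n) (Bn n) (An n) (Bn n)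
        (memVecC d (An n) (Bn n)) (vecCNorm d (An n) (Bn n)) C ∧
      InvBoundedBy d (An n) (Bn n) (An n) (Bn n)
        (memVecC1 d (An n) (Bn n)) (vecC1Norm d (An n) (Bn n)) C) ∧
    -- uniform bound for `(I − ℋ_{Δ⃗_n,Δ⃗′})⁻¹` on `C(Δ⃗′)` and on `C¹(Δ⃗′)`
    (∀ A' B' : Fin d → ℝ,
      (∀ i, A' i < B' i) →
      (∀ i j, i ≠ j → Disjoint (Set.Icc (A' i) (B' i)) (Set.Icc (A' j) (B' j))) →
      (∀ n i, Set.Icc (An n i) (Bn n i) ⊆ Set.Icc (A' i) (B' i)) →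
      ∃ C' : ℝ, ∀ n,
        InvBoundedBy d (An n) (Bn n) A' B'
          (memVecC d A' B') (vecCNorm d A' B') C' ∧
        InvBoundedBy d (An n) (Bn n) A' B'
          (memVecC1 d A' B') (vecC1Norm d A' B') C') := by
  refine ⟨?_, fun A' B' hAB' hdisj' hsub => ?_⟩
  · obtain ⟨δ, L, h⟩ := exists_isSeparated_of_tendsto hAB hdisj hABn hdisjn hconvA hconvB
    exact (inverse_uniformly_bounded_general d δ L).imp fun C hC n =>
      hC _ _ _ _ (h n) (hABn n) fun _ => Subset.rfl
  · obtain ⟨δ, L, h⟩ := exists_isSeparated_of_tendsto (An := fun _ => A') (Bn := fun _ => B')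
      hAB' hdisj' (fun _ => hAB') (fun _ => hdisj') (fun _ => tendsto_const_nhds)
      fun _ => tendsto_const_nhds
    exact (inverse_uniformly_bounded_general d δ L).imp fun C hC n =>
      hC _ _ _ _ (h 0) (hABn n) (hsub n)

end
end
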